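/- Let X be a K-convex complex Banach space and p ∈ (1,∞). Then there exist c, C ∈ (0,∞) and A ∈ [1,∞) such that for every n,d ∈ ℕ with 0 ≤ d ≤ n−1, every function f : {-1,1}^n → X in the d-th tail space satisfies, for all t ≥ 0, ‖e^{-tΔ} f‖_{L_p({-1,1}^n;X)} ≤ C e^{-c·d·min{t, t^A}} · ‖f‖_{L_p({-1,1}^n;X)}. -/

import Mathlib

open scoped BigOperators ENNReal NNReal

noncomputable section

namespace HammingCube

variable {X : Type*} [NormedAddCommGroup X] [NormedSpace ℂ X]

/-- The sign ±1 associated to a boolean coordinate. -/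
def sgn (b : Bool) : ℝ := if b then 1 else -1

/-- The Walsh function `w_A(ε) = ∏_{i ∈ A} ε_i`. -/
def walsh {n : ℕ} (A : Finset (Fin n)) (ε : Fin n → Bool) : ℝ := ∏ i ∈ A, sgn (ε i)

/-- The Fourier–Walsh coefficient `f̂(A) = 2⁻ⁿ ∑_δ f(δ) w_A(δ)`. -/
def coeff {n : ℕ} (f : (Fin n → Bool) → X) (A : Finset (Fin n)) : X :=
  (2 ^ n : ℝ)⁻¹ • ∑ δ : Fin n → Bool, walsh A δ • f δ

/-- `f` has degree at most `d`: `f̂(A) = 0` whenever `|A| > d`. -/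
def degLE {n : ℕ} (f : (Fin n → Bool) → X) (d : ℕ) : Prop :=
  ∀ A : Finset (Fin n), d < A.card → coeff f A = 0

/-- `f` belongs to the `d`-th tail space: `f̂(A) = 0` whenever `|A| < d`. -/
def tailSpace {n : ℕ} (f : (Fin n → Bool) → X) (d : ℕ) : Prop :=
  ∀ A : Finset (Fin n), A.card < d → coeff f A = 0

/-- The heat semigroup `e^{-tΔ} f = ∑_A e^{-t|A|} f̂(A) w_A`. -/
def heat {n : ℕ} (t : ℝ) (f : (Fin n → Bool) → X) : (Fin n → Bool) → X :=
  fun ε => ∑ A : Finset (Fin n), Real.exp (-t * A.card) • walsh A ε • coeff f A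

/-- The hypercube Laplacian `Δ f = ∑_A |A| f̂(A) w_A`. -/
def lap {n : ℕ} (f : (Fin n → Bool) → X) : (Fin n → Bool) → X :=
  fun ε => ∑ A : Finset (Fin n), (A.card : ℝ) • walsh A ε • coeff f A

/-- The fractional Laplacian `Δ^γ f = ∑_A |A|^γ f̂(A) w_A`. -/
def fracLap {n : ℕ} (γ : ℝ) (f : (Fin n → Bool) → X) : (Fin n → Bool) → X :=
  fun ε => ∑ A : Finset (Fin n), ((A.card : ℝ) ^ γ) • walsh A ε • coeff f A

/-- The `i`-th discrete partial derivative. -/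
def pderiv {n : ℕ} (i : Fin n) (f : (Fin n → Bool) → X) : (Fin n → Bool) → X :=
  fun ε => (2 : ℝ)⁻¹ • (f ε - f (Function.update ε i (!(ε i))))

/-- The vector-valued `L_p` norm `(2⁻ⁿ ∑_ε ‖f(ε)‖^p)^{1/p}` for finite `p`. -/
def lpNorm {n : ℕ} {Y : Type*} [NormedAddCommGroup Y] (p : ℝ)
    (f : (Fin n → Bool) → Y) : ℝ :=
  ((2 ^ n : ℝ)⁻¹ * ∑ ε : Fin n → Bool, ‖f ε‖ ^ p) ^ (1 / p)

/-- The `L_∞` norm `max_ε ‖f(ε)‖`. -/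
def linfNorm {n : ℕ} {Y : Type*} [NormedAddCommGroup Y]
    (f : (Fin n → Bool) → Y) : ℝ :=
  ⨆ ε : Fin n → Bool, ‖f ε‖

/-- The `L_p` norm for `p ∈ [1,∞]` encoded as `p : ℝ≥0∞`. -/
def lpNormE {n : ℕ} {Y : Type*} [NormedAddCommGroup Y] (p : ℝ≥0∞)
    (f : (Fin n → Bool) → Y) : ℝ :=
  if p = ⊤ then linfNorm f else lpNorm p.toReal f

/-- The scalar `L_p` norm of the gradient `‖(∑_i |∂_i f|²)^{1/2}‖_{L_p}`. -/
def gradLpNorm {n : ℕ} (p : ℝ) (f : (Fin n → Bool) → ℂ) : ℝ :=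
  lpNorm p (fun ε => Real.sqrt (∑ i : Fin n, ‖pderiv i f ε‖ ^ 2))

/-- The Rademacher projection `Rad f(ε) = ∑_i f̂({i}) ε_i`. -/
def Rad {n : ℕ} (f : (Fin n → Bool) → X) : (Fin n → Bool) → X :=
  fun ε => ∑ i : Fin n, sgn (ε i) • coeff f {i}

/-- A complex Banach space is `K`-convex if the Rademacher projections are uniformly
bounded on `L_q` for some `q ∈ (1,∞)`. -/
def KConvex (X : Type*) [NormedAddCommGroup X] [NormedSpace ℂ X] : Prop :=
  ∃ q : ℝ, 1 < q ∧ ∃ M : ℝ, ∀ (n : ℕ) (f : (Fin n → Bool) → X),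
    lpNorm q (Rad f) ≤ M * lpNorm q f

/-- `X` has cotype `q` with constant `C`. -/
def HasCotype (X : Type*) [NormedAddCommGroup X] [NormedSpace ℂ X] (q C : ℝ) : Prop :=
  ∀ (n : ℕ) (x : Fin n → X),
    C⁻¹ * (∑ i : Fin n, ‖x i‖ ^ q) ^ (1 / q) ≤
      ((2 ^ n : ℝ)⁻¹ * ∑ ε : Fin n → Bool, ‖∑ i : Fin n, sgn (ε i) • x i‖ ^ q) ^ (1 / q)

/-- The entropy `Ent(h)` of a nonnegative function on the cube. -/
def entropy {n : ℕ} (h : (Fin n → Bool) → ℝ) : ℝ :=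
  (2 ^ n : ℝ)⁻¹ * ∑ ε : Fin n → Bool, h ε * Real.log (h ε) -
    ((2 ^ n : ℝ)⁻¹ * ∑ ε : Fin n → Bool, h ε) *
      Real.log ((2 ^ n : ℝ)⁻¹ * ∑ ε : Fin n → Bool, h ε)

/-- The `L_∞` norm of the gradient `max_ε (∑_i |∂_i f(ε)|²)^{1/2}`. -/
def gradLinfNorm {n : ℕ} (f : (Fin n → Bool) → ℂ) : ℝ :=
  ⨆ ε : Fin n → Bool, Real.sqrt (∑ i : Fin n, ‖pderiv i f ε‖ ^ 2)


theorem sq_exp_integrable (b : ℝ) (hb : 0 < b) :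
    MeasureTheory.IntegrableOn (fun s : ℝ => s ^ 2 * Real.exp (-(b * s))) (Set.Ioi 0) := by
  have h := integrableOn_rpow_mul_exp_neg_mul_rpow (s := 2) (p := 1) (b := b) (by norm_num) (by norm_num) hb
  refine h.congr_fun (fun x _ => ?_) measurableSet_Ioi
  simp

theorem sq_cexp_integrable (c : ℂ) (hb : 0 < c.re) :
    MeasureTheory.IntegrableOn (fun s : ℝ => (s : ℂ) ^ 2 * Complex.exp (-(c * s))) (Set.Ioi 0) := by
  refine MeasureTheory.Integrable.mono' (sq_exp_integrable c.re hb) ?_ ?_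
  · exact (by fun_prop : Continuous _).aestronglyMeasurable
  · refine Filter.Eventually.of_forall fun s => ?_
    rw [norm_mul, norm_pow, Complex.norm_real, Complex.norm_exp]
    simp

theorem pow_mul_cexp_tendsto (c : ℂ) (hb : 0 < c.re) (n : ℕ) :
    Filter.Tendsto (fun s : ℝ => (s : ℂ) ^ n * Complex.exp (-(c * s))) Filter.atTop (nhds 0) := by
  rw [tendsto_zero_iff_norm_tendsto_zero]
  have h := tendsto_rpow_mul_exp_neg_mul_atTop_nhds_zero (n : ℝ) c.re hb
  refine h.congr' ?_
  filter_upwards [Filter.eventually_ge_atTop 0] with s hs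
  rw [norm_mul, norm_pow, Complex.norm_real, Complex.norm_exp, Real.norm_of_nonneg hs]
  simp

theorem sq_cexp_integral (c : ℂ) (hb : 0 < c.re) :
    ∫ s : ℝ in Set.Ioi 0, (s : ℂ) ^ 2 * Complex.exp (-(c * s)) = 2 / c ^ 3 := by
  have hc : c ≠ 0 := by rintro rfl; simp at hb
  have hd : ∀ s : ℝ, HasDerivAt (fun s : ℝ => -(1 / c * ((s : ℂ) ^ 2 * Complex.exp (-(c * s))) + 2 / c ^ 2 * ((s : ℂ) ^ 1 * Complex.exp (-(c * s)))
      + 2 / c ^ 3 * ((s : ℂ) ^ 0 * Complex.exp (-(c * s))))) ((s : ℂ) ^ 2 * Complex.exp (-(c * s))) s := by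
    intro s
    have h1 : HasDerivAt (fun s : ℝ => (s : ℂ)) 1 s := Complex.ofRealCLM.hasDerivAt (x := s)
    have h2 : HasDerivAt (fun s : ℝ => Complex.exp (-(c * s))) (Complex.exp (-(c * s)) * (-(c * 1))) s :=
      (h1.const_mul c).fun_neg.cexp
    have h3 := (((((h1.fun_pow 2).fun_mul h2).const_mul (1 / c)).fun_add (((h1.fun_pow 1).fun_mul h2).const_mul (2 / c ^ 2))).fun_add
      (((h1.fun_pow 0).fun_mul h2).const_mul (2 / c ^ 3))).fun_neg
    refine h3.congr_deriv ?_
    simp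
    field_simp
    ring
  have ht : Filter.Tendsto (fun s : ℝ => -(1 / c * ((s : ℂ) ^ 2 * Complex.exp (-(c * s))) + 2 / c ^ 2 * ((s : ℂ) ^ 1 * Complex.exp (-(c * s)))
      + 2 / c ^ 3 * ((s : ℂ) ^ 0 * Complex.exp (-(c * s))))) Filter.atTop (nhds 0) := by
    have := ((((pow_mul_cexp_tendsto c hb 2).const_mul (1 / c)).add ((pow_mul_cexp_tendsto c hb 1).const_mul (2 / c ^ 2))).add
      ((pow_mul_cexp_tendsto c hb 0).const_mul (2 / c ^ 3))).neg
    simpa using this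
  have := MeasureTheory.integral_Ioi_of_hasDerivAt_of_tendsto' (a := 0) (fun x _ => hd x) (sq_cexp_integrable c hb) ht
  rw [this]
  simp

/-- Laplace inversion of `2/(b+2πiξ)^3`. -/
theorem laplace_inv (b t : ℝ) (hb : 0 < b) (ht : 0 < t) :
    MeasureTheory.Integrable (fun ξ : ℝ => Complex.exp ((2 * Real.pi * ξ * t : ℝ) * Complex.I) *
      (2 / ((b : ℂ) + (2 * Real.pi * ξ : ℝ) * Complex.I) ^ 3)) ∧
    ∫ ξ : ℝ, Complex.exp ((2 * Real.pi * ξ * t : ℝ) * Complex.I) *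
      (2 / ((b : ℂ) + (2 * Real.pi * ξ : ℝ) * Complex.I) ^ 3) = (t : ℂ) ^ 2 * Complex.exp (-(b * t : ℝ)) := by
  have hpi := Real.pi_pos
  set g : ℝ → ℂ := Set.indicator (Set.Ioi 0) (fun s : ℝ => (s : ℂ) ^ 2 * Complex.exp (-((b : ℂ) * s))) with hg
  have hre : ∀ ξ : ℝ, ((b : ℂ) + (2 * Real.pi * ξ : ℝ) * Complex.I).re = b := by intro ξ; simp
  have hne : ∀ ξ : ℝ, ((b : ℂ) + (2 * Real.pi * ξ : ℝ) * Complex.I) ≠ 0 := by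
    intro ξ h
    have := hre ξ
    rw [h] at this
    simp at this; linarith
  have hF : FourierTransform.fourier g = fun ξ : ℝ => 2 / ((b : ℂ) + (2 * Real.pi * ξ : ℝ) * Complex.I) ^ 3 := by
    funext ξ
    rw [Real.fourier_real_eq_integral_exp_smul]
    have h1 : (fun v : ℝ => Complex.exp (((-2 * Real.pi * v * ξ : ℝ) : ℂ) * Complex.I) • g v) =
        Set.indicator (Set.Ioi 0) (fun v : ℝ => (v : ℂ) ^ 2 * Complex.exp (-(((b : ℂ) + (2 * Real.pi * ξ : ℝ) * Complex.I) * v))) := by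
      funext v
      by_cases hv : v ∈ Set.Ioi (0 : ℝ)
      · simp only [hg, Set.indicator_of_mem hv, smul_eq_mul]
        rw [mul_left_comm, ← Complex.exp_add]
        congr 2
        push_cast; ring
      · simp [hg, Set.indicator_of_notMem hv]
    rw [h1, MeasureTheory.integral_indicator measurableSet_Ioi, sq_cexp_integral _ (by rw [hre]; exact hb)]
  have hgi : MeasureTheory.Integrable g := by
    rw [hg, MeasureTheory.integrable_indicator_iff measurableSet_Ioi]
    exact sq_cexp_integrable b (by simpa using hb)
  have hbd : ∀ ξ : ℝ, ‖2 / ((b : ℂ) + (2 * Real.pi * ξ : ℝ) * Complex.I) ^ 3‖ ≤ 2 / b ^ 3 * (1 + (2 * Real.pi / b * ξ) ^ 2)⁻¹ := by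
    intro ξ
    set z := (b : ℂ) + (2 * Real.pi * ξ : ℝ) * Complex.I with hz
    have h1 : b ≤ ‖z‖ := by
      have := Complex.abs_re_le_norm z
      rw [hre, abs_of_pos hb] at this; exact this
    have h2 : ‖z‖ ^ 2 = b ^ 2 * (1 + (2 * Real.pi / b * ξ) ^ 2) := by
      rw [← Complex.normSq_eq_norm_sq, Complex.normSq_apply, hz]
      simp; field_simp
    rw [norm_div, norm_pow, Complex.norm_two]
    have h3 : 2 / b ^ 3 * (1 + (2 * Real.pi / b * ξ) ^ 2)⁻¹ = 2 / (b * ‖z‖ ^ 2) := by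
      rw [h2]; field_simp
    rw [h3]
    have hzp : 0 < ‖z‖ := hb.trans_le h1
    apply div_le_div_of_nonneg_left (by norm_num) (by positivity)
    nlinarith [sq_nonneg ‖z‖]
  have hcont : Continuous (fun ξ : ℝ => 2 / ((b : ℂ) + (2 * Real.pi * ξ : ℝ) * Complex.I) ^ 3) := by
    refine Continuous.div continuous_const (by fun_prop) fun ξ => pow_ne_zero _ (hne ξ)
  have hmaj : MeasureTheory.Integrable (fun ξ : ℝ => 2 / b ^ 3 * (1 + (2 * Real.pi / b * ξ) ^ 2)⁻¹) :=
    (integrable_inv_one_add_sq.comp_mul_left' (by positivity)).const_mul _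
  have hFi : MeasureTheory.Integrable (FourierTransform.fourier g) := by
    rw [hF]
    exact hmaj.mono' hcont.aestronglyMeasurable (Filter.Eventually.of_forall hbd)
  have hgt : ContinuousAt g t := by
    have : ContinuousAt (fun s : ℝ => (s : ℂ) ^ 2 * Complex.exp (-((b : ℂ) * s))) t := by fun_prop
    refine this.congr ?_
    filter_upwards [Ioi_mem_nhds ht] with s hs
    rw [hg, Set.indicator_of_mem hs]
  constructor
  · refine hmaj.mono' (by exact ((by fun_prop : Continuous fun ξ : ℝ => Complex.exp ((2 * Real.pi * ξ * t : ℝ) * Complex.I)).mul hcont).aestronglyMeasurable) ?_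
    refine Filter.Eventually.of_forall fun ξ => ?_
    rw [norm_mul, Complex.norm_exp_ofReal_mul_I, one_mul]
    exact hbd ξ
  · have := hgi.fourierInv_fourier_eq hFi hgt
    rw [Real.fourierInv_eq', hF, hg, Set.indicator_of_mem (show t ∈ Set.Ioi 0 from ht)] at this
    rw [Complex.ofReal_mul, ← this]
    congr 1
    funext v
    rw [smul_eq_mul]
    congr 4
    simp; ring

/-- A finite resolution of the identity on `E`. -/
structure Resol (ι E : Type*) [Fintype ι] [NormedAddCommGroup E] [NormedSpace ℂ E] where
  pr : ι → E →ₗ[ℂ] E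
  orth : ∀ i j f, i ≠ j → pr i (pr j f) = 0
  idem : ∀ i f, pr i (pr i f) = pr i f
  tot : ∀ f, ∑ i, pr i f = f

namespace Resol

variable {ι E : Type*} [Fintype ι] [NormedAddCommGroup E] [NormedSpace ℂ E] (P : Resol ι E)

/-- The multiplier with symbol `m`. -/
def mul (m : ι → ℂ) (f : E) : E := ∑ i, m i • P.pr i f

theorem pr_mul (m : ι → ℂ) (f : E) (i : ι) : P.pr i (P.mul m f) = m i • P.pr i f := by
  classical
  simp only [mul, map_sum, map_smul]
  rw [Finset.sum_eq_single i]
  · rw [P.idem]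
  · intro j _ hj
    rw [P.orth i j f (Ne.symm hj), smul_zero]
  · simp

theorem mul_mul (m m' : ι → ℂ) (f : E) : P.mul m (P.mul m' f) = P.mul (m * m') f := by
  unfold mul
  refine Finset.sum_congr rfl fun i _ => ?_
  have := P.pr_mul m' f i
  unfold mul at this
  rw [this, smul_smul, Pi.mul_apply]

theorem mul_one (f : E) : P.mul 1 f = f := by
  simp [mul, P.tot]

theorem mul_add (m m' : ι → ℂ) (f : E) : P.mul (m + m') f = P.mul m f + P.mul m' f := by
  simp [mul, add_smul, Finset.sum_add_distrib]

theorem mul_sub (m m' : ι → ℂ) (f : E) : P.mul (m - m') f = P.mul m f - P.mul m' f := by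
  simp [mul, sub_smul, Finset.sum_sub_distrib]

theorem mul_smul (c : ℂ) (m : ι → ℂ) (f : E) : P.mul (c • m) f = c • P.mul m f := by
  simp [mul, Finset.smul_sum, smul_smul]

theorem mul_sum {κ : Type*} (s : Finset κ) (m : κ → ι → ℂ) (f : E) :
    P.mul (∑ j ∈ s, m j) f = ∑ j ∈ s, P.mul (m j) f := by
  simp only [mul, Finset.sum_apply, Finset.sum_smul]
  rw [Finset.sum_comm]

theorem mul_vsub (m : ι → ℂ) (f g : E) : P.mul m (f - g) = P.mul m f - P.mul m g := by
  simp [mul, smul_sub, Finset.sum_sub_distrib]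

theorem mul_vsmul (m : ι → ℂ) (c : ℂ) (g : E) : P.mul m (c • g) = c • P.mul m g := by
  simp only [mul, map_smul, Finset.smul_sum]
  exact Finset.sum_congr rfl fun i _ => smul_comm _ _ _

theorem mul_vsum {κ : Type*} (s : Finset κ) (m : ι → ℂ) (g : κ → E) :
    P.mul m (∑ j ∈ s, g j) = ∑ j ∈ s, P.mul m (g j) := by
  simp only [mul, map_sum, Finset.smul_sum]
  rw [Finset.sum_comm]

theorem mul_zero (m : ι → ℂ) : P.mul m 0 = 0 := by simp [mul]

theorem pow_bound (m : ι → ℂ) (C : ℝ) (hC : 0 ≤ C) (h : ∀ f, ‖P.mul m f‖ ≤ C * ‖f‖) (j : ℕ) (f : E) :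
    ‖P.mul (m ^ j) f‖ ≤ C ^ j * ‖f‖ := by
  induction j generalizing f with
  | zero => simp [mul_one]
  | succ j ih =>
    rw [pow_succ, ← mul_mul]
    calc _ ≤ C ^ j * ‖P.mul m f‖ := ih _
      _ ≤ C ^ j * (C * ‖f‖) := by gcongr; exact h f
      _ = _ := by ring

/-- The semigroup symbol. -/
def sg (k : ι → ℝ) (z : ℂ) : ι → ℂ := fun i => Complex.exp (-z * k i)

theorem sg_add (k : ι → ℝ) (z w : ℂ) : sg k (z + w) = sg k z * sg k w := by
  funext i
  simp only [sg, Pi.mul_apply, ← Complex.exp_add]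
  congr 1; ring

/-- Resolvent step. -/
theorem resolvent_step (k : ι → ℝ) (hk : ∀ i, 0 ≤ k i)
    (hT : ∀ t : ℝ, 0 ≤ t → ∀ f, ‖P.mul (sg k t) f‖ ≤ ‖f‖)
    (μ : ℂ) (hμ : 0 < μ.re) (f : E) (h : ℝ) (hh : 0 ≤ h) :
    ‖P.mul (fun i => 1 / (μ + k i)) f - Complex.exp (-μ * h) • P.mul (sg k h) (P.mul (fun i => 1 / (μ + k i)) f)‖
      ≤ h * ‖f‖ := by
  have hne : ∀ i, μ + k i ≠ 0 := by
    intro i h0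
    have := congrArg Complex.re h0
    simp at this
    linarith [hk i]
  set g := P.mul (fun i => 1 / (μ + k i)) f with hg
  let u : ℝ → E := fun s => ∑ i, Complex.exp (-(μ + k i) * s) • P.pr i g
  have hu : ∀ s : ℝ, u s = Complex.exp (-μ * s) • P.mul (sg k s) g := by
    intro s
    simp only [u, mul, sg, Finset.smul_sum, smul_smul, ← Complex.exp_add]
    refine Finset.sum_congr rfl fun i _ => ?_
    congr 2; ring
  have hd : ∀ s : ℝ, HasDerivAt u (-(Complex.exp (-μ * s) • P.mul (sg k s) f)) s := by
    intro s
    have h1 : ∀ i, HasDerivAt (fun s : ℝ => Complex.exp (-(μ + k i) * s) • P.pr i g)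
        ((Complex.exp (-(μ + k i) * s) * (-(μ + k i))) • P.pr i g) s := by
      intro i
      have h2 : HasDerivAt (fun s : ℝ => Complex.exp (-(μ + k i) * s)) (Complex.exp (-(μ + k i) * s) * (-(μ + k i))) s := by
        have h3 : HasDerivAt (fun s : ℝ => -(μ + k i) * (s : ℂ)) (-(μ + k i)) s := by
          simpa using (Complex.ofRealCLM.hasDerivAt (x := s)).const_mul (-(μ + k i))
        exact h3.cexp
      exact h2.smul_const _
    have h4 := HasDerivAt.fun_sum (u := Finset.univ) fun i _ => h1 i
    refine h4.congr_deriv ?_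
    simp only [mul, sg, Finset.smul_sum, smul_smul, ← Complex.exp_add, ← Finset.sum_neg_distrib]
    refine Finset.sum_congr rfl fun i _ => ?_
    rw [hg, pr_mul, smul_smul, ← neg_smul]
    congr 1
    have := hne i
    rw [show -μ * ↑s + -↑s * ↑(k i) = -(μ + k i) * s by ring]
    field_simp
  have := norm_image_sub_le_of_norm_deriv_le_segment' (f := u) (a := 0) (b := h) (C := ‖f‖)
    (fun x _ => (hd x).hasDerivWithinAt) (fun x hx => by
      rw [norm_neg, norm_smul, Complex.norm_exp]
      have h5 : Real.exp (-μ * x).re ≤ 1 := by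
        rw [Real.exp_le_one_iff]
        simp
        exact mul_nonneg hμ.le hx.1
      calc _ ≤ 1 * ‖f‖ := by gcongr; exact hT x hx.1 f
        _ = _ := by ring) h ⟨hh, le_rfl⟩
  rw [hu h, hu 0] at this
  have h0 : P.mul (sg k ((0 : ℝ) : ℂ)) g = g := by
    have : sg k ((0 : ℝ) : ℂ) = 1 := by funext i; simp [sg]
    rw [this, mul_one]
  rw [h0, norm_sub_rev] at this
  simp only [Complex.ofReal_zero, MulZeroClass.mul_zero, Complex.exp_zero, one_smul, sub_zero] at this
  linarith [mul_comm h ‖f‖]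

/-- Resolvent bound. -/
theorem resolvent_bound (k : ι → ℝ) (hk : ∀ i, 0 ≤ k i)
    (hT : ∀ t : ℝ, 0 ≤ t → ∀ f, ‖P.mul (sg k t) f‖ ≤ ‖f‖)
    (δ : ℝ) (hδ : 0 < δ)
    (hL : ∀ t : ℝ, 0 ≤ t → ∀ f, δ * ‖f‖ ≤ ‖f + P.mul (sg k t) f‖)
    (μ : ℂ) (hμ : 0 < μ.re) (f : E) :
    ‖P.mul (fun i => 1 / (μ + k i)) f‖ ≤ (2 + 2 * Real.pi / δ) / ‖μ‖ * ‖f‖ := by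
  have hpi := Real.pi_pos
  have hμ0 : 0 < ‖μ‖ := norm_pos_iff.2 (by rintro rfl; simp at hμ)
  have step := P.resolvent_step k hk hT μ hμ f
  set g := P.mul (fun i => 1 / (μ + k i)) f with hg
  have hre : μ.re * ‖g‖ ≤ 2 * ‖f‖ := by
    have h1 := step (1 / μ.re) (by positivity)
    have h2 : ‖Complex.exp (-μ * ((1 / μ.re : ℝ) : ℂ)) • P.mul (sg k ((1 / μ.re : ℝ) : ℂ)) g‖ ≤ Real.exp (-1) * ‖g‖ := by
      rw [norm_smul, Complex.norm_exp]
      have : (-μ * ((1 / μ.re : ℝ) : ℂ)).re = -1 := by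
        rw [Complex.re_mul_ofReal]; simp [hμ.ne']
      rw [this]
      gcongr
      exact hT _ (by positivity) g
    have h3 : Real.exp (-1) ≤ 1 / 2 := by
      rw [Real.exp_neg, one_div]
      apply inv_anti₀ (by norm_num)
      linarith [Real.add_one_le_exp 1]
    have h4 := norm_sub_norm_le g (Complex.exp (-μ * ((1 / μ.re : ℝ) : ℂ)) • P.mul (sg k ((1 / μ.re : ℝ) : ℂ)) g)
    have h5 : ‖g‖ / 2 ≤ 1 / μ.re * ‖f‖ := by nlinarith [norm_nonneg g]
    have : μ.re * (‖g‖ / 2) ≤ μ.re * (1 / μ.re * ‖f‖) := by gcongr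
    rw [← mul_assoc, mul_one_div_cancel hμ.ne', one_mul] at this
    linarith
  have him : |μ.im| * ‖g‖ ≤ (2 * Real.pi / δ) * ‖f‖ := by
    rcases eq_or_ne μ.im 0 with h0 | h0
    · rw [h0]; simp; positivity
    have hp : 0 < |μ.im| := abs_pos.2 h0
    set h : ℝ := Real.pi / |μ.im| with hh
    have hh0 : 0 ≤ h := by positivity
    have h1 := step h hh0
    set r : ℝ := Real.exp (-μ.re * h) with hr
    have hr1 : r ≤ 1 := by
      rw [hr, Real.exp_le_one_iff]; nlinarith [mul_nonneg hμ.le hh0]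
    have hr0 : 0 < r := Real.exp_pos _
    have h2 : Complex.exp (-μ * h) = -(r : ℂ) := by
      have e1 : -μ * h = ((-μ.re * h : ℝ) : ℂ) + ((-(μ.im * h) : ℝ) : ℂ) * Complex.I := by
        apply Complex.ext <;> simp
      rw [e1, Complex.exp_add, ← Complex.ofReal_exp]
      have e2 : Complex.exp (((-(μ.im * h) : ℝ) : ℂ) * Complex.I) = -1 := by
        rcases abs_cases μ.im with ⟨ha, _⟩ | ⟨ha, _⟩
        · have : -(μ.im * h) = -Real.pi := by
            rw [hh, ha]; field_simp
          rw [this]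
          push_cast
          rw [neg_mul, Complex.exp_neg, Complex.exp_pi_mul_I]; norm_num
        · have : -(μ.im * h) = Real.pi := by
            rw [hh, ha]; field_simp
          rw [this, Complex.exp_pi_mul_I]
      rw [e2]; simp [hr]
    rw [h2, neg_smul, sub_neg_eq_add] at h1
    set Tg := P.mul (sg k h) g with hTg
    have h3 : ‖Tg‖ ≤ ‖g‖ := hT h hh0 g
    have h4 : δ * ‖g‖ ≤ ‖g + Tg‖ := hL h hh0 g
    have h5 : ‖g + Tg‖ ≤ ‖g + (r : ℂ) • Tg‖ + (1 - r) * ‖g‖ := by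
      have : g + Tg = (g + (r : ℂ) • Tg) + ((1 - r : ℝ) : ℂ) • Tg := by
        push_cast; rw [sub_smul, one_smul]; abel
      rw [this]
      refine (norm_add_le _ _).trans ?_
      rw [norm_smul, Complex.norm_real, Real.norm_of_nonneg (by linarith)]
      gcongr
    have h6 : (1 - r) * ‖g‖ ≤ ‖g + (r : ℂ) • Tg‖ := by
      have := norm_sub_norm_le g (-((r : ℂ) • Tg))
      rw [sub_neg_eq_add, norm_neg, norm_smul, Complex.norm_real, Real.norm_of_nonneg hr0.le] at this
      nlinarith
    have h7 : δ * ‖g‖ ≤ 2 * (h * ‖f‖) := by linarith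
    have h8 : |μ.im| * (δ * ‖g‖) ≤ |μ.im| * (2 * (h * ‖f‖)) := by gcongr
    have h9 : |μ.im| * (2 * (h * ‖f‖)) = 2 * Real.pi * ‖f‖ := by
      rw [hh]; field_simp
    rw [div_mul_eq_mul_div, le_div_iff₀ hδ]
    linarith [h8, h9]
  rw [div_mul_eq_mul_div, le_div_iff₀ hμ0]
  have : ‖μ‖ ≤ μ.re + |μ.im| := by
    have := Complex.norm_le_abs_re_add_abs_im μ
    rwa [abs_of_pos hμ] at this
  nlinarith [norm_nonneg g]

theorem deriv_bound [CompleteSpace E] (k : ι → ℝ) (hk : ∀ i, 0 ≤ k i)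
    (M : ℝ) (hM : 0 ≤ M)
    (hR : ∀ μ : ℂ, 0 < μ.re → ∀ f, ‖P.mul (fun i => 1 / (μ + k i)) f‖ ≤ M / ‖μ‖ * ‖f‖)
    (t : ℝ) (ht : 0 < t) (f : E) :
    ‖P.mul (fun i => (k i : ℂ) * sg k t i) f‖ ≤ (3 * (1 + M) * M ^ 2) / t * ‖f‖ := by
  have hpi := Real.pi_pos
  set a : ℝ := 1 / t with ha
  have ha0 : 0 < a := by positivity
  let mu : ℝ → ℂ := fun ξ => (a : ℂ) + (2 * Real.pi * ξ : ℝ) * Complex.I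
  have hmure : ∀ ξ, (mu ξ).re = a := by intro ξ; simp [mu]
  have hmun : ∀ ξ, ‖mu ξ‖ ^ 2 = a ^ 2 + (2 * Real.pi * ξ) ^ 2 := by
    intro ξ
    rw [← Complex.normSq_eq_norm_sq, Complex.normSq_apply]
    simp [mu]; ring
  let F : ℝ → E := fun ξ => ∑ i, (k i : ℂ) • (Complex.exp ((2 * Real.pi * ξ * t : ℝ) * Complex.I) *
      (2 / (((a + k i : ℝ) : ℂ) + (2 * Real.pi * ξ : ℝ) * Complex.I) ^ 3)) • P.pr i f
  have hint : ∫ ξ, F ξ = ((t : ℂ) ^ 2 * Complex.exp (-1)) • P.mul (fun i => (k i : ℂ) * sg k t i) f := by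
    simp only [F]
    rw [MeasureTheory.integral_finsetSum]
    · simp only [mul, Finset.smul_sum]
      refine Finset.sum_congr rfl fun i _ => ?_
      rw [MeasureTheory.integral_smul, integral_smul_const,
        (laplace_inv (a + k i) t (by linarith [hk i]) ht).2]
      rw [smul_smul, smul_smul]
      congr 1
      have : Complex.exp (-((a + k i) * t : ℝ)) = Complex.exp (-1) * sg k t i := by
        rw [sg, ← Complex.exp_add]
        congr 1
        have : a * t = 1 := by rw [ha]; field_simp
        rw [add_mul, this]; push_cast; ring
      rw [this]; ring
    · intro i _
      exact ((laplace_inv (a + k i) t (by linarith [hk i]) ht).1.smul_const _).smul _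
  have hFb : ∀ ξ, ‖F ξ‖ ≤ 2 * ((1 + M) * M ^ 2) * ‖f‖ * (a ^ 2)⁻¹ * (1 + (2 * Real.pi / a * ξ) ^ 2)⁻¹ := by
    intro ξ
    have hmu0 : 0 < (mu ξ).re := by rw [hmure]; exact ha0
    have hmn : 0 < ‖mu ξ‖ := norm_pos_iff.2 (by intro h; rw [h] at hmu0; simp at hmu0)
    have hne : ∀ i, mu ξ + k i ≠ 0 := by
      intro i h0
      have := congrArg Complex.re h0
      simp [hmure] at this
      linarith [hk i]
    set R : ι → ℂ := fun i => 1 / (mu ξ + k i) with hRdef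
    have e1 : F ξ = (2 * Complex.exp ((2 * Real.pi * ξ * t : ℝ) * Complex.I)) •
        P.mul (1 - mu ξ • R) (P.mul (R ^ 2) f) := by
      rw [mul_mul]
      simp only [F, mul, Finset.smul_sum]
      refine Finset.sum_congr rfl fun i _ => ?_
      rw [smul_smul, smul_smul]
      congr 1
      have := hne i
      simp only [hRdef, Pi.mul_apply, Pi.sub_apply, Pi.one_apply, Pi.smul_apply, Pi.pow_apply, smul_eq_mul]
      have e2 : ((a + k i : ℝ) : ℂ) + (2 * Real.pi * ξ : ℝ) * Complex.I = mu ξ + k i := by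
        simp only [mu]; push_cast; ring
      rw [e2]
      field_simp
      ring
    have hRb : ∀ g, ‖P.mul R g‖ ≤ M / ‖mu ξ‖ * ‖g‖ := hR (mu ξ) hmu0
    have h2 := P.pow_bound R (M / ‖mu ξ‖) (by positivity) hRb 2 f
    have h3 : ∀ g, ‖P.mul (1 - mu ξ • R) g‖ ≤ (1 + M) * ‖g‖ := by
      intro g
      rw [mul_sub, mul_one, mul_smul]
      refine (norm_sub_le _ _).trans ?_
      rw [norm_smul]
      have : ‖mu ξ‖ * ‖P.mul R g‖ ≤ ‖mu ξ‖ * (M / ‖mu ξ‖ * ‖g‖) := by gcongr; exact hRb g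
      have e : ‖mu ξ‖ * (M / ‖mu ξ‖ * ‖g‖) = M * ‖g‖ := by field_simp
      linarith
    rw [e1, norm_smul, norm_mul, Complex.norm_exp_ofReal_mul_I]
    calc _ ≤ ‖(2 : ℂ)‖ * 1 * ((1 + M) * ((M / ‖mu ξ‖) ^ 2 * ‖f‖)) := by
            gcongr
            exact (h3 _).trans (by gcongr)
      _ = 2 * ((1 + M) * M ^ 2) * ‖f‖ * (‖mu ξ‖ ^ 2)⁻¹ := by
            simp; ring
      _ = _ := by
            rw [hmun, mul_assoc _ (a ^ 2)⁻¹, ← mul_inv]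
            congr 2
            field_simp
  have hc : 2 * Real.pi / a ≠ 0 := by positivity
  have hI : ‖∫ ξ, F ξ‖ ≤ ∫ ξ, 2 * ((1 + M) * M ^ 2) * ‖f‖ * (a ^ 2)⁻¹ * (1 + (2 * Real.pi / a * ξ) ^ 2)⁻¹ := by
    apply MeasureTheory.norm_integral_le_of_norm_le
    · exact (integrable_inv_one_add_sq.comp_mul_left' hc).const_mul _
    · exact Filter.Eventually.of_forall hFb
  rw [MeasureTheory.integral_const_mul, MeasureTheory.Measure.integral_comp_mul_left (fun x : ℝ => (1 + x ^ 2)⁻¹),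
    integral_univ_inv_one_add_sq, hint, norm_smul, norm_mul, norm_pow, Complex.norm_real, Real.norm_of_nonneg ht.le] at hI
  have hexp : ‖Complex.exp (-1)‖ = (Real.exp 1)⁻¹ := by
    rw [Complex.norm_exp]; simp [Real.exp_neg]
  have he3 : Real.exp 1 < 3 := by linarith [Real.exp_one_lt_d9]
  have he0 := Real.exp_pos 1
  rw [hexp, abs_of_pos (by positivity), smul_eq_mul] at hI
  have e5 : 2 * ((1 + M) * M ^ 2) * ‖f‖ * (a ^ 2)⁻¹ * ((2 * Real.pi / a)⁻¹ * Real.pi) = (1 + M) * M ^ 2 * ‖f‖ * t := by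
    rw [ha]; field_simp
  rw [e5] at hI
  set Z := ‖P.mul (fun i => (k i : ℂ) * sg k t i) f‖
  have h6 : t ^ 2 * Z ≤ Real.exp 1 * ((1 + M) * M ^ 2 * ‖f‖ * t) := by
    have : Real.exp 1 * (t ^ 2 * (Real.exp 1)⁻¹ * Z) ≤ Real.exp 1 * ((1 + M) * M ^ 2 * ‖f‖ * t) := by gcongr
    have e : Real.exp 1 * (t ^ 2 * (Real.exp 1)⁻¹ * Z) = t ^ 2 * Z := by field_simp
    linarith
  have h7 : Real.exp 1 * ((1 + M) * M ^ 2 * ‖f‖ * t) ≤ 3 * ((1 + M) * M ^ 2 * ‖f‖ * t) := by gcongr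
  rw [div_mul_eq_mul_div, le_div_iff₀ ht]
  have h8 : t * (Z * t) ≤ t * (3 * (1 + M) * M ^ 2 * ‖f‖) := by nlinarith
  exact le_of_mul_le_mul_left h8 ht

theorem sector_bound (k : ι → ℝ)
    (hT : ∀ t : ℝ, 0 ≤ t → ∀ f, ‖P.mul (sg k t) f‖ ≤ ‖f‖)
    (C : ℝ) (hC : 0 < C)
    (hD : ∀ t : ℝ, 0 < t → ∀ f, ‖P.mul (fun i => (k i : ℂ) * sg k t i) f‖ ≤ C / t * ‖f‖)
    (t s : ℝ) (ht : 0 < t) (hs : |s| ≤ 1 / (6 * C) * t) (f : E) :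
    ‖P.mul (sg k (t + s * Complex.I)) f‖ ≤ 2 * ‖f‖ := by
  let v : ℕ → E := fun j => ((-(s * Complex.I)) ^ j / (j.factorial : ℂ)) • P.mul (fun i => (k i : ℂ) ^ j * sg k t i) f
  have hv : HasSum v (P.mul (sg k (t + s * Complex.I)) f) := by
    have h1 : ∀ i, HasSum (fun j : ℕ => (((-(s * Complex.I)) ^ j / (j.factorial : ℂ)) * ((k i : ℂ) ^ j * sg k t i)) • P.pr i f)
        (sg k (t + s * Complex.I) i • P.pr i f) := by
      intro i
      apply HasSum.smul_const
      have h2 := NormedSpace.expSeries_div_hasSum_exp (𝔸 := ℂ) (-(s * Complex.I) * k i)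
      rw [← Complex.exp_eq_exp_ℂ] at h2
      have h3 := h2.mul_right (sg k t i)
      have e : Complex.exp (-(s * Complex.I) * k i) * sg k t i = sg k (t + s * Complex.I) i := by
        simp only [sg, ← Complex.exp_add]; congr 1; ring
      rw [e] at h3
      have e5 : (fun j : ℕ => ((-(s * Complex.I)) ^ j / (j.factorial : ℂ)) * ((k i : ℂ) ^ j * sg k t i)) =
          fun j : ℕ => (-(s * Complex.I) * k i) ^ j / (j.factorial : ℂ) * sg k t i := by
        funext j
        rw [mul_pow]; ring
      rw [e5]
      exact h3
    have h4 := hasSum_sum (s := Finset.univ) fun i _ => h1 i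
    have e4 : v = fun j => ∑ i, (((-(s * Complex.I)) ^ j / (j.factorial : ℂ)) * ((k i : ℂ) ^ j * sg k t i)) • P.pr i f := by
      funext j
      simp only [v, mul, Finset.smul_sum, smul_smul]
    rw [e4]
    exact h4
  have hb : ∀ j, ‖v j‖ ≤ (1 / 2 : ℝ) ^ j * ‖f‖ := by
    intro j
    rcases Nat.eq_zero_or_pos j with rfl | hj
    · simp only [v, pow_zero, Nat.factorial_zero, Nat.cast_one, div_one, one_smul, one_mul]
      exact hT t ht.le f
    have hj' : (0 : ℝ) < j := by exact_mod_cast hj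
    have e1 : (fun i => (k i : ℂ) ^ j * sg k t i) = (fun i => (k i : ℂ) * sg k ((t / j : ℝ) : ℂ) i) ^ j := by
      funext i
      simp only [Pi.pow_apply, mul_pow, sg]
      rw [← Complex.exp_nat_mul]
      congr 2
      have : (j : ℂ) ≠ 0 := by exact_mod_cast hj.ne'
      push_cast
      field_simp
    have h2 := P.pow_bound _ (C / (t / j)) (by positivity) (hD (t / j) (by positivity)) j f
    simp only [v]
    rw [e1, norm_smul, norm_div, norm_pow, norm_neg, norm_mul, Complex.norm_I, Complex.norm_real, _root_.mul_one,
      Complex.norm_natCast, Real.norm_eq_abs]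
    have h3 := Real.pow_div_factorial_le_exp (j : ℝ) hj'.le j
    have h4 : Real.exp (j : ℝ) ≤ 3 ^ j := by
      rw [← _root_.mul_one (j : ℝ), Real.exp_nat_mul]
      exact pow_le_pow_left₀ (Real.exp_pos 1).le (by linarith [Real.exp_one_lt_d9]) j
    have hfac : (0 : ℝ) < j.factorial := by exact_mod_cast j.factorial_pos
    calc |s| ^ j / (j.factorial : ℝ) * ‖P.mul ((fun i => (k i : ℂ) * sg k ((t / j : ℝ) : ℂ) i) ^ j) f‖
        ≤ (1 / (6 * C) * t) ^ j / (j.factorial : ℝ) * ((C / (t / j)) ^ j * ‖f‖) := by gcongr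
      _ = (1 / 6) ^ j * ((j : ℝ) ^ j / (j.factorial : ℝ)) * ‖f‖ := by
          have : (1 / (6 * C) * t) * (C / (t / j)) = 1 / 6 * j := by field_simp
          have h5 : (1 / (6 * C) * t) ^ j * (C / (t / j)) ^ j = (1 / 6) ^ j * (j : ℝ) ^ j := by
            rw [← mul_pow, this, mul_pow]
          linear_combination (‖f‖ / j.factorial) * h5
      _ ≤ (1 / 6) ^ j * 3 ^ j * ‖f‖ := by gcongr; exact h3.trans h4
      _ = _ := by rw [← mul_pow]; norm_num
  rw [← hv.tsum_eq]
  exact tsum_of_norm_bounded (hasSum_geometric_two.mul_right ‖f‖) hb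

theorem far_bound (k : ι → ℕ) (κ : ℝ) (hκ : 0 < κ)
    (hS : ∀ t s : ℝ, 0 < t → |s| ≤ κ * t → ∀ f, ‖P.mul (sg (fun i => (k i : ℝ)) (t + s * Complex.I)) f‖ ≤ 2 * ‖f‖)
    (d : ℕ) (f : E) (hf : ∀ i, k i < d → P.pr i f = 0) (z : ℂ) (hz : Real.pi / κ ≤ z.re) :
    ‖P.mul (sg (fun i => (k i : ℝ)) z) f‖ ≤ 2 * Real.exp (-(d * (z.re - Real.pi / κ))) * ‖f‖ := by
  have hpi := Real.pi_pos
  set a := Real.pi / κ with ha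
  have ha0 : 0 < a := by positivity
  let H : ℂ → E := fun w => ∑ i, w ^ (k i - d) • P.pr i f
  have key : ∀ z : ℂ, P.mul (sg (fun i => (k i : ℝ)) z) f = Complex.exp (-z) ^ d • H (Complex.exp (-z)) := by
    intro z
    simp only [H, mul, Finset.smul_sum, smul_smul]
    refine Finset.sum_congr rfl fun i _ => ?_
    rcases lt_or_ge (k i) d with h | h
    · rw [hf i h]; simp
    · congr 1
      rw [← pow_add, Nat.add_sub_cancel' h, sg, ← Complex.exp_nat_mul]
      congr 1; push_cast; ring
  have hfr : ∀ w ∈ frontier (Metric.ball (0 : ℂ) (Real.exp (-a))), ‖H w‖ ≤ 2 * Real.exp (d * a) * ‖f‖ := by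
    intro w hw
    rw [frontier_ball _ (Real.exp_pos _).ne', mem_sphere_zero_iff_norm] at hw
    have hw0 : w ≠ 0 := by
      rintro rfl
      simp at hw
      exact (Real.exp_pos (-a)).ne hw
    have h1 := key (-Complex.log w)
    rw [neg_neg, Complex.exp_log hw0] at h1
    have h2 : -Complex.log w = (a : ℂ) + ((-w.arg : ℝ) : ℂ) * Complex.I := by
      apply Complex.ext
      · simp [Complex.log_re, hw]
      · simp [Complex.log_im]
    have h3 := hS a (-w.arg) ha0 (by
      rw [abs_neg, ha, mul_div_cancel₀ _ hκ.ne']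
      exact Complex.abs_arg_le_pi w) f
    rw [← h2, h1, norm_smul, norm_pow, hw, ← Real.exp_nat_mul] at h3
    have h4 : Real.exp (d * a) * (Real.exp (d * -a) * ‖H w‖) ≤ Real.exp (d * a) * (2 * ‖f‖) := by gcongr
    rw [← mul_assoc, ← Real.exp_add] at h4
    simp at h4
    linarith
  have hd : Differentiable ℂ H := by
    intro w
    refine DifferentiableAt.fun_sum fun i _ => ?_
    exact ((differentiableAt_id).pow _).smul_const _
  have hnz : ‖Complex.exp (-z)‖ = Real.exp (-z.re) := by rw [Complex.norm_exp]; simp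
  have hH := Complex.norm_le_of_forall_mem_frontier_norm_le (Metric.isBounded_ball) hd.diffContOnCl hfr
    (z := Complex.exp (-z)) (by
      rw [closure_ball _ (Real.exp_pos _).ne', mem_closedBall_zero_iff, hnz]
      exact Real.exp_le_exp.2 (by linarith))
  rw [key, norm_smul, norm_pow, hnz, ← Real.exp_nat_mul]
  calc _ ≤ Real.exp (d * -z.re) * (2 * Real.exp (d * a) * ‖f‖) := by gcongr
    _ = 2 * (Real.exp (d * -z.re) * Real.exp (d * a)) * ‖f‖ := by ring
    _ = _ := by rw [← Real.exp_add]; congr 3; ring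

theorem near_bound (k : ι → ℕ) (κ : ℝ) (hκ : 0 < κ)
    (hS : ∀ t s : ℝ, 0 < t → |s| ≤ κ * t → ∀ f, ‖P.mul (sg (fun i => (k i : ℝ)) (t + s * Complex.I)) f‖ ≤ 2 * ‖f‖)
    (A : ℕ) (hA : 2 ≤ A) (hAκ : Real.tan (Real.pi / (2 * A)) ≤ κ)
    (c : ℝ) (hc : 0 < c) (hcA : c * (2 * (Real.pi / κ) * (1 + κ)) ^ A ≤ Real.pi / κ)
    (d : ℕ) (f : E) (hf : ∀ i, k i < d → P.pr i f = 0) (t : ℝ) (ht : 0 < t) (ht' : t < 2 * (Real.pi / κ)) :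
    ‖P.mul (sg (fun i => (k i : ℝ)) t) f‖ ≤ 2 * Real.exp (-(c * d * t ^ A)) * ‖f‖ := by
  have hpi := Real.pi_pos
  set a := Real.pi / κ with ha
  have ha0 : 0 < a := by positivity
  set φ := Real.pi / (2 * A) with hφ
  have hA' : (2 : ℝ) ≤ A := by exact_mod_cast hA
  have hφ0 : 0 < φ := by positivity
  have hφ1 : φ < Real.pi / 2 := by
    rw [hφ]; apply div_lt_div_of_pos_left hpi (by norm_num); linarith
  have hcos : 0 < Real.cos φ := Real.cos_pos_of_mem_Ioo ⟨by linarith, hφ1⟩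
  set T := Real.tan φ with hTdef
  have hT0 : 0 < T := Real.tan_pos_of_pos_of_lt_pi_div_two hφ0 hφ1
  let U : Set ℂ := {z | 0 < z.re ∧ z.re < 2 * a ∧ |z.im| < T * z.re}
  let V : Set ℂ := {z | 0 ≤ z.re ∧ z.re ≤ 2 * a ∧ |z.im| ≤ T * z.re}
  have hUo : IsOpen U := by
    refine (isOpen_lt continuous_const Complex.continuous_re).inter
      ((isOpen_lt Complex.continuous_re continuous_const).inter
      (isOpen_lt (continuous_abs.comp Complex.continuous_im) (continuous_const.mul Complex.continuous_re)))
  have hVc : IsClosed V := by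
    refine (isClosed_le continuous_const Complex.continuous_re).inter
      ((isClosed_le Complex.continuous_re continuous_const).inter
      (isClosed_le (continuous_abs.comp Complex.continuous_im) (continuous_const.mul Complex.continuous_re)))
  have hUV : U ⊆ V := fun z hz => ⟨hz.1.le, hz.2.1.le, hz.2.2.le⟩
  have hcl : closure U ⊆ V := closure_minimal hUV hVc
  have hnorm : ∀ z ∈ V, ‖z‖ ≤ 2 * a * (1 + κ) := by
    intro z hz
    have := Complex.norm_le_abs_re_add_abs_im z
    rw [abs_of_nonneg hz.1] at this
    have h2 : |z.im| ≤ κ * (2 * a) := hz.2.2.trans (by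
      have := hz.1
      have := hz.2.1
      gcongr)
    linarith [hz.2.1]
  have hUb : Bornology.IsBounded U := by
    refine (Metric.isBounded_closedBall (x := (0 : ℂ)) (r := 2 * a * (1 + κ))).subset ?_
    intro z hz
    rw [mem_closedBall_zero_iff]
    exact hnorm z (hUV hz)
  let G : ℂ → E := fun z => Complex.exp (((c * d : ℝ) : ℂ) * z ^ A) • P.mul (sg (fun i => (k i : ℝ)) z) f
  have hG : Differentiable ℂ G := by
    intro z
    refine DifferentiableAt.smul (by fun_prop) ?_
    simp only [mul, sg]
    refine DifferentiableAt.fun_sum fun i _ => ?_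
    exact DifferentiableAt.smul_const (by fun_prop) _
  have hGn : ∀ z, ‖G z‖ = Real.exp (c * d * (z ^ A).re) * ‖P.mul (sg (fun i => (k i : ℝ)) z) f‖ := by
    intro z
    simp only [G]
    rw [norm_smul, Complex.norm_exp, Complex.re_ofReal_mul]
  have hreim : ∀ z : ℂ, z = (z.re : ℂ) + z.im * Complex.I := fun z => (Complex.re_add_im z).symm
  have hside : ∀ z : ℂ, 0 < z.re → |z.im| = T * z.re → (z ^ A).re = 0 := by
    intro z hz him
    have hpol : ∀ σ : ℝ, (σ = 1 ∨ σ = -1) → z.im = σ * (T * z.re) → (z ^ A).re = 0 := by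
      intro σ hσ h
      have e1 : z = ((z.re / Real.cos φ : ℝ) : ℂ) * Complex.exp ((σ * φ : ℝ) * Complex.I) := by
        rw [Complex.exp_mul_I, ← Complex.ofReal_cos, ← Complex.ofReal_sin]
        have hcs : Real.cos (σ * φ) = Real.cos φ := by rcases hσ with rfl | rfl <;> simp
        have hsn : Real.sin (σ * φ) = σ * Real.sin φ := by rcases hσ with rfl | rfl <;> simp
        rw [hcs, hsn]
        apply Complex.ext
        · rw [Complex.re_ofReal_mul]
          simp only [Complex.add_re, Complex.ofReal_re, Complex.mul_re, Complex.I_re, Complex.ofReal_im, Complex.I_im]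
          field_simp; ring
        · rw [Complex.im_ofReal_mul]
          simp only [Complex.add_im, Complex.ofReal_re, Complex.mul_im, Complex.I_re, Complex.ofReal_im, Complex.I_im]
          rw [h, hTdef, Real.tan_eq_sin_div_cos]
          field_simp; ring
      rw [e1, mul_pow, ← Complex.exp_nat_mul, ← Complex.ofReal_pow, Complex.re_ofReal_mul]
      have e2 : (A : ℂ) * ((σ * φ : ℝ) * Complex.I) = ((σ * (Real.pi / 2) : ℝ) : ℂ) * Complex.I := by
        have : (A : ℝ) * (σ * φ) = σ * (Real.pi / 2) := by rw [hφ]; field_simp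
        rw [← this]; push_cast; ring
      rw [e2, Complex.exp_ofReal_mul_I_re]
      rcases hσ with rfl | rfl <;> simp
    rcases abs_cases z.im with ⟨h, _⟩ | ⟨h, _⟩
    · exact hpol 1 (Or.inl rfl) (by linarith)
    · exact hpol (-1) (Or.inr rfl) (by linarith)
  have hfr : ∀ z ∈ frontier U, ‖G z‖ ≤ 2 * ‖f‖ := by
    intro z hz
    have hzV : z ∈ V := hcl hz.1
    have hzU : z ∉ U := by
      have := hz.2
      rwa [hUo.interior_eq] at this
    obtain ⟨h1, h2, h3⟩ := hzV
    rw [hGn]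
    rcases h1.eq_or_lt with h0 | h0
    · have : z = 0 := by
        apply Complex.ext
        · exact h0.symm
        · rw [← h0] at h3; simpa using h3
      subst this
      have e : sg (fun i => (k i : ℝ)) (0 : ℂ) = 1 := by funext i; simp [sg]
      rw [e, mul_one, zero_pow (by omega)]
      simp
      linarith [norm_nonneg f]
    rcases h3.eq_or_lt with h4 | h4
    · rw [hside z h0 h4]
      simp only [MulZeroClass.mul_zero, Real.exp_zero, one_mul]
      rw [hreim z]
      exact hS z.re z.im h0 (h3.trans (by gcongr)) f
    · have h5 : z.re = 2 * a := by
        refine le_antisymm h2 ?_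
        by_contra hlt
        exact hzU ⟨h0, not_le.1 hlt, h4⟩
      have h6 := P.far_bound k κ hκ hS d f hf z (by rw [← ha, h5]; linarith)
      rw [← ha, h5] at h6
      have h7 : (z ^ A).re ≤ (2 * a * (1 + κ)) ^ A := by
        refine (Complex.re_le_norm _).trans ?_
        rw [norm_pow]
        gcongr
        exact hnorm z ⟨h1, h2, h3⟩
      have h9 : c * d * (z ^ A).re ≤ d * a := by
        calc c * d * (z ^ A).re ≤ c * d * (2 * a * (1 + κ)) ^ A := by gcongr
          _ = d * (c * (2 * a * (1 + κ)) ^ A) := by ring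
          _ ≤ d * a := by gcongr
      calc _ ≤ Real.exp (d * a) * (2 * Real.exp (-(d * (2 * a - a))) * ‖f‖) :=
              mul_le_mul (Real.exp_le_exp.2 h9) h6 (norm_nonneg _) (Real.exp_pos _).le
        _ = 2 * ‖f‖ * (Real.exp (d * a) * Real.exp (-(d * (2 * a - a)))) := by ring
        _ = 2 * ‖f‖ := by
              rw [← Real.exp_add, show (d : ℝ) * a + -(d * (2 * a - a)) = 0 by ring, Real.exp_zero, _root_.mul_one]
  have hfin := Complex.norm_le_of_forall_mem_frontier_norm_le hUb hG.diffContOnCl hfr (z := (t : ℂ))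
    (subset_closure ⟨by simpa using ht, by simpa using ht', by simp; positivity⟩)
  rw [hGn, ← Complex.ofReal_pow, Complex.ofReal_re] at hfin
  have h8 : Real.exp (-(c * d * t ^ A)) * (Real.exp (c * d * t ^ A) * ‖P.mul (sg (fun i => (k i : ℝ)) t) f‖) ≤
      Real.exp (-(c * d * t ^ A)) * (2 * ‖f‖) := by gcongr
  rw [← mul_assoc, ← Real.exp_add, neg_add_cancel, Real.exp_zero, one_mul] at h8
  linarith


theorem prod_bound {κ : Type*} (s : Finset κ) (q : κ → ι → ℂ) (h : ∀ j f, ‖P.mul (q j) f‖ ≤ ‖f‖) (f : E) :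
    ‖P.mul (∏ j ∈ s, q j) f‖ ≤ ‖f‖ := by
  classical
  induction s using Finset.induction_on generalizing f with
  | empty => simp [mul_one]
  | insert a s ha ih =>
    rw [Finset.prod_insert ha, ← mul_mul]
    exact (h _ _).trans (ih f)

/-- Argument of Pisier: commuting contractive projections and absence of `ℓ₁ⁿ`. -/
theorem prod_one_sub_bound {J : Type*} [Fintype J] [Nonempty J] (q : J → ι → ℂ)
    (hq : ∀ j f, ‖P.mul (q j) f‖ ≤ ‖f‖) (hidem : ∀ j, q j * q j = q j)
    (κ : ℝ) (hκ : 0 < κ)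
    (beck : ∀ (x : J → E) (R : ℝ), 0 ≤ R → (∀ j, ‖x j‖ ≤ R) →
      ∃ ε : J → Bool, ‖∑ j, (sgn (ε j) : ℂ) • x j‖ ≤ Fintype.card J * (1 - κ) * R) (f : E) :
    ‖P.mul (∏ j, (1 - q j)) f‖ ≤ (2 ^ Fintype.card J - κ / 2) * ‖f‖ := by
  classical
  by_contra hcon
  push Not at hcon
  set v := P.mul (∏ j, (1 - q j)) f with hv
  set R := ‖f‖ with hR
  have hR0 : 0 < R := by
    rcases (norm_nonneg f).eq_or_lt with h | h
    · exfalso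
      have hf : f = 0 := norm_eq_zero.1 h.symm
      rw [hv, hR, hf, mul_zero] at hcon
      simp at hcon
    · exact h
  obtain ⟨ξ, hξ1, hξv⟩ := exists_dual_vector'' ℂ v
  let c : Finset J → ℝ := fun B => ((-1 : ℂ) ^ B.card * ξ (P.mul (∏ j ∈ B, q j) f)).re
  have hsum : ∑ B : Finset J, c B = ‖v‖ := by
    have e1 : ∏ j, (1 - q j) = ∑ B : Finset J, (-1 : ℂ) ^ B.card • ∏ j ∈ B, q j := by
      have := Finset.prod_one_add (f := fun j => - q j) (Finset.univ : Finset J)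
      simp only [← sub_eq_add_neg] at this
      rw [this, Finset.powerset_univ]
      refine Finset.sum_congr rfl fun B _ => ?_
      rw [Finset.prod_neg]
      funext i
      simp
    have e2 : ξ v = ∑ B : Finset J, (-1 : ℂ) ^ B.card * ξ (P.mul (∏ j ∈ B, q j) f) := by
      rw [hv, e1, mul_sum, map_sum]
      refine Finset.sum_congr rfl fun B _ => ?_
      rw [mul_smul, map_smul, smul_eq_mul]
    rw [← Complex.ofReal_re ‖v‖]
    have : ((‖v‖ : ℝ) : ℂ) = ξ v := hξv.symm
    rw [this, e2, Complex.re_sum]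
  have hnorm1 : ∀ B : Finset J, ‖((-1 : ℂ) ^ B.card)‖ = 1 := by intro B; simp
  have hξle : ∀ g, ‖ξ g‖ ≤ ‖g‖ := fun g => (ξ.le_opNorm g).trans (by nlinarith [norm_nonneg g])
  have hcle : ∀ B, c B ≤ R := by
    intro B
    refine (Complex.re_le_norm _).trans ?_
    rw [norm_mul, hnorm1, one_mul]
    exact (hξle _).trans (P.prod_bound B q hq f)
  have hcge : ∀ B, R - κ / 2 * R < c B := by
    intro B
    have h1 : ∑ B' ∈ Finset.univ.erase B, c B' ≤ ∑ B' ∈ Finset.univ.erase B, R := Finset.sum_le_sum fun B' _ => hcle B'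
    have h2 := Finset.add_sum_erase Finset.univ c (Finset.mem_univ B)
    rw [Finset.sum_const, Finset.card_erase_of_mem (Finset.mem_univ B), Finset.card_univ, Fintype.card_finset, nsmul_eq_mul,
      Nat.cast_sub Nat.one_le_two_pow] at h1
    push_cast at h1
    rw [hsum] at h2
    nlinarith
  obtain ⟨ε, hε⟩ := beck (fun j => P.mul (q j) f) R hR0.le (fun j => hq j f)
  let B : Finset J := Finset.univ.filter fun j => ε j = true
  have hkey : ∑ j, c (insert j B) = ((-1 : ℂ) ^ B.card * ξ (P.mul (∏ j ∈ B, q j) (∑ j, (sgn (ε j) : ℂ) • P.mul (q j) f))).re := by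
    rw [mul_vsum, map_sum, Finset.mul_sum, Complex.re_sum]
    refine Finset.sum_congr rfl fun j _ => ?_
    rw [mul_vsmul, map_smul, mul_mul, smul_eq_mul]
    simp only [c]
    by_cases hj : j ∈ B
    · have hj' : ε j = true := by simpa [B] using hj
      have e : (∏ j ∈ B, q j) * q j = ∏ j ∈ B, q j := by
        rw [← Finset.mul_prod_erase B q hj, mul_right_comm, hidem]
      rw [Finset.insert_eq_of_mem hj, e, hj']
      simp [sgn]
    · have hj' : ε j = false := by simpa [B] using hj
      rw [Finset.card_insert_of_notMem hj, Finset.prod_insert hj, hj', mul_comm (q j)]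
      congr 1
      simp [sgn, pow_succ]
  have h3 : ∑ j, c (insert j B) ≤ Fintype.card J * (1 - κ) * R := by
    rw [hkey]
    refine (Complex.re_le_norm _).trans ?_
    rw [norm_mul, hnorm1, one_mul]
    exact ((hξle _).trans (P.prod_bound B q hq _)).trans hε
  have h4 : ∑ j : J, (R - κ / 2 * R) ≤ ∑ j, c (insert j B) := Finset.sum_le_sum fun j _ => (hcge _).le
  rw [Finset.sum_const, Finset.card_univ, nsmul_eq_mul] at h4
  have h5 : (0 : ℝ) < Fintype.card J := by exact_mod_cast Fintype.card_pos
  have h6 : 0 < (Fintype.card J : ℝ) * (κ * R) := by positivity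
  nlinarith

theorem lower_bound {J S : Type*} [Fintype J] [Nonempty J] [Fintype S] (q : S → ι → ℂ) (w : S → ℝ)
    (hw : ∀ s, 0 ≤ w s) (hw1 : ∑ s, w s = 1)
    (hq : ∀ s f, ‖P.mul (q s) f‖ ≤ ‖f‖) (hidem : ∀ s, q s * q s = q s)
    (κ : ℝ) (hκ : 0 < κ)
    (beck : ∀ (x : J → E) (R : ℝ), 0 ≤ R → (∀ j, ‖x j‖ ≤ R) →
      ∃ ε : J → Bool, ‖∑ j, (sgn (ε j) : ℂ) • x j‖ ≤ Fintype.card J * (1 - κ) * R)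
    (T : ι → ℂ) (hT : T = ∑ s, (w s : ℂ) • q s) :
    (∀ f, ‖P.mul T f‖ ≤ ‖f‖) ∧
    ∀ f, (κ / (Fintype.card J * 2 ^ Fintype.card J)) * ‖f‖ ≤ ‖f + P.mul T f‖ := by
  classical
  set n := Fintype.card J with hn
  have hn0 : (0 : ℝ) < n := by exact_mod_cast Fintype.card_pos
  have hT1 : ∀ f, ‖P.mul T f‖ ≤ ‖f‖ := by
    intro f
    rw [hT, mul_sum]
    refine (norm_sum_le _ _).trans ?_
    calc _ ≤ ∑ s, w s * ‖f‖ := by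
            refine Finset.sum_le_sum fun s _ => ?_
            rw [mul_smul, norm_smul, Complex.norm_real, Real.norm_of_nonneg (hw s)]
            exact mul_le_mul_of_nonneg_left (hq s f) (hw s)
      _ = ‖f‖ := by rw [← Finset.sum_mul, hw1, one_mul]
  refine ⟨hT1, fun f => ?_⟩
  have hpow : ‖P.mul ((1 - T) ^ n) f‖ ≤ (2 ^ n - κ / 2) * ‖f‖ := by
    have e1 : 1 - T = ∑ s, (w s : ℂ) • (1 - q s) := by
      simp only [smul_sub, Finset.sum_sub_distrib, ← hT, ← Finset.sum_smul, ← Complex.ofReal_sum, hw1]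
      simp
    have e2 : (1 - T) ^ n = ∑ σ : J → S, ((∏ j, w (σ j) : ℝ) : ℂ) • ∏ j, (1 - q (σ j)) := by
      rw [e1, hn, ← Finset.card_univ, ← Finset.prod_const, Fintype.prod_sum]
      refine Finset.sum_congr rfl fun σ _ => ?_
      rw [Finset.prod_smul]; push_cast; rfl
    rw [e2, mul_sum]
    refine (norm_sum_le _ _).trans ?_
    calc _ ≤ ∑ σ : J → S, (∏ j, w (σ j)) * ((2 ^ n - κ / 2) * ‖f‖) := by
            refine Finset.sum_le_sum fun σ _ => ?_
            have hw' : 0 ≤ ∏ j, w (σ j) := Finset.prod_nonneg fun j _ => hw _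
            rw [mul_smul, norm_smul, Complex.norm_real, Real.norm_of_nonneg hw']
            refine mul_le_mul_of_nonneg_left ?_ hw'
            exact P.prod_one_sub_bound (fun j => q (σ j)) (fun j => hq _) (fun j => hidem _) κ hκ beck f
      _ = _ := by
            rw [← Finset.sum_mul, ← Fintype.prod_sum (fun (_ : J) s => w s), hw1]
            simp
  set S' : ι → ℂ := (1 / 2 : ℂ) • (1 - T) with hS'
  have hS1 : ∀ g, ‖P.mul S' g‖ ≤ 1 * ‖g‖ := by
    intro g
    rw [hS', mul_smul, mul_sub, mul_one, norm_smul]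
    have := norm_sub_le g (P.mul T g)
    have h2 := hT1 g
    norm_num
    linarith
  have hSn : ‖P.mul (S' ^ n) f‖ ≤ (1 - κ / 2 / 2 ^ n) * ‖f‖ := by
    rw [hS', smul_pow, mul_smul, norm_smul]
    have e : ‖((1 / 2 : ℂ) ^ n)‖ = (2 ^ n : ℝ)⁻¹ := by simp
    rw [e]
    calc _ ≤ (2 ^ n : ℝ)⁻¹ * ((2 ^ n - κ / 2) * ‖f‖) := by gcongr
      _ = _ := by field_simp
  have hgeo : f = P.mul (S' ^ n) f + ∑ j ∈ Finset.range n, P.mul (S' ^ j) (P.mul (1 - S') f) := by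
    simp only [mul_mul]
    rw [← mul_sum, ← Finset.sum_mul, geom_sum_mul_neg, mul_sub, mul_one]
    abel
  have h1S : P.mul (1 - S') f = (1 / 2 : ℂ) • (f + P.mul T f) := by
    have : 1 - S' = (1 / 2 : ℂ) • (1 + T) := by
      funext i; simp [hS']; ring
    rw [this, mul_smul, mul_add, mul_one]
  have h5 : ‖f‖ ≤ (1 - κ / 2 / 2 ^ n) * ‖f‖ + n * (1 / 2 * ‖f + P.mul T f‖) := by
    calc ‖f‖ = ‖P.mul (S' ^ n) f + ∑ j ∈ Finset.range n, P.mul (S' ^ j) (P.mul (1 - S') f)‖ := by rw [← hgeo]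
      _ ≤ ‖P.mul (S' ^ n) f‖ + ∑ j ∈ Finset.range n, ‖P.mul (S' ^ j) (P.mul (1 - S') f)‖ :=
          (norm_add_le _ _).trans (by gcongr; exact norm_sum_le _ _)
      _ ≤ (1 - κ / 2 / 2 ^ n) * ‖f‖ + ∑ j ∈ Finset.range n, (1 / 2 * ‖f + P.mul T f‖) := by
          gcongr with j hj
          have := P.pow_bound S' 1 zero_le_one hS1 j (P.mul (1 - S') f)
          rw [one_pow, one_mul] at this
          refine this.trans ?_
          rw [h1S, norm_smul]
          norm_num
      _ = _ := by simp
  have h6 : κ / 2 / 2 ^ n * ‖f‖ ≤ n * (1 / 2 * ‖f + P.mul T f‖) := by linarith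
  have h7 : κ / (n * 2 ^ n) * ‖f‖ = 2 / n * (κ / 2 / 2 ^ n * ‖f‖) := by field_simp
  rw [h7]
  calc _ ≤ 2 / n * (n * (1 / 2 * ‖f + P.mul T f‖)) := by gcongr
    _ = _ := by field_simp

end Resol

theorem sgn_sq (b : Bool) : sgn b * sgn b = 1 := by cases b <;> simp [sgn]

theorem abs_sgn (b : Bool) : |sgn b| = 1 := by cases b <;> simp [sgn]

theorem riesz_id (m : ℕ) (b : Fin m → ℝ) (hb : ∀ j, b j * b j = 1) (u : ℂ) :
    ∑ δ : Fin m → Bool, ((∑ j, b j * sgn (δ j) : ℝ) : ℂ) * ∏ k, (1 + u * (b k * sgn (δ k) : ℝ))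
      = 2 ^ m * (m * u) := by
  have h1 : ∀ (δ : Fin m → Bool),
      ((∑ j, b j * sgn (δ j) : ℝ) : ℂ) * ∏ k, (1 + u * (b k * sgn (δ k) : ℝ))
      = ∑ j, ∏ k, ((if k = j then ((b j * sgn (δ k) : ℝ) : ℂ) else 1) * (1 + u * (b k * sgn (δ k) : ℝ))) := by
    intro δ
    rw [Complex.ofReal_sum, Finset.sum_mul]
    refine Finset.sum_congr rfl fun j _ => ?_
    rw [Finset.prod_mul_distrib, Finset.prod_ite_eq']
    simp
  simp_rw [h1]
  rw [Finset.sum_comm]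
  have h2 : ∀ j : Fin m, ∑ δ : Fin m → Bool,
      ∏ k, ((if k = j then ((b j * sgn (δ k) : ℝ) : ℂ) else 1) * (1 + u * (b k * sgn (δ k) : ℝ)))
      = 2 ^ m * u := by
    intro j
    rw [← Fintype.prod_sum (fun k (x : Bool) =>
      ((if k = j then ((b j * sgn x : ℝ) : ℂ) else 1) * (1 + u * (b k * sgn x : ℝ))))]
    have h3 : ∀ k, ∑ x : Bool, ((if k = j then ((b j * sgn x : ℝ) : ℂ) else 1) * (1 + u * (b k * sgn x : ℝ)))
        = 2 * (if k = j then u else 1) := by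
      intro k
      have hbc : (b j : ℂ) * b j = 1 := by exact_mod_cast hb j
      by_cases hk : k = j
      · subst hk
        simp [sgn]
        linear_combination (2 * u) * hbc
      · simp [hk, sgn]
        ring
    simp_rw [h3]
    rw [Finset.prod_mul_distrib, Finset.prod_ite_eq']
    simp
  simp_rw [h2]
  simp
  ring

theorem khinchine_one (m : ℕ) (hm : 0 < m) (b : Fin m → ℝ) (hb : ∀ j, b j * b j = 1) :
    2 ^ m * (Real.sqrt m / 2) ≤ ∑ δ : Fin m → Bool, |∑ j, b j * sgn (δ j)| := by
  have hm' : (0 : ℝ) < m := by exact_mod_cast hm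
  have hs : 0 < Real.sqrt m := Real.sqrt_pos.2 hm'
  have key := riesz_id m b hb (Complex.I / (Real.sqrt m : ℝ))
  have hnorm : ‖(2 : ℂ) ^ m * (m * (Complex.I / (Real.sqrt m : ℝ)))‖ = 2 ^ m * Real.sqrt m := by
    simp [abs_of_pos hs]
    field_simp
    rw [Real.sq_sqrt hm'.le]
  have hfac : ∀ δ : Fin m → Bool,
      ‖∏ k, (1 + Complex.I / (Real.sqrt m : ℝ) * (b k * sgn (δ k) : ℝ))‖ ≤ 2 := by
    intro δ
    have h4 : ∀ k, ‖(1 + Complex.I / (Real.sqrt m : ℝ) * (b k * sgn (δ k) : ℝ) : ℂ)‖ ^ 2 = 1 + 1 / m := by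
      intro k
      have : (1 + Complex.I / (Real.sqrt m : ℝ) * (b k * sgn (δ k) : ℝ) : ℂ)
          = ((1 : ℝ) : ℂ) + ((b k * sgn (δ k) / Real.sqrt m : ℝ) : ℂ) * Complex.I := by
        push_cast; ring
      rw [this, ← Complex.normSq_eq_norm_sq, Complex.normSq_add_mul_I, div_pow, Real.sq_sqrt hm'.le, mul_pow,
        pow_two (b k), pow_two (sgn _), hb, sgn_sq]
      simp
    have h5 : ‖∏ k, (1 + Complex.I / (Real.sqrt m : ℝ) * (b k * sgn (δ k) : ℝ) : ℂ)‖ ^ 2 ≤ 2 ^ 2 := by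
      rw [norm_prod, ← Finset.prod_pow]
      simp_rw [h4]
      rw [Finset.prod_const, Finset.card_univ, Fintype.card_fin]
      have h6 : (1 + 1 / (m : ℝ)) ≤ Real.exp (1 / m) := by
        linarith [Real.add_one_le_exp (1 / (m : ℝ))]
      calc (1 + 1 / (m : ℝ)) ^ m ≤ Real.exp (1 / m) ^ m := by gcongr
        _ = Real.exp 1 := by
          rw [← Real.exp_nat_mul]; congr 1; field_simp
        _ ≤ 2 ^ 2 := by linarith [Real.exp_one_lt_d9]
    exact le_of_sq_le_sq h5 (by norm_num)
  have h7 : 2 ^ m * Real.sqrt m ≤ ∑ δ : Fin m → Bool, |∑ j, b j * sgn (δ j)| * 2 := by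
    rw [← hnorm, ← key]
    refine (norm_sum_le _ _).trans (Finset.sum_le_sum fun δ _ => ?_)
    rw [norm_mul, Complex.norm_real, Real.norm_eq_abs]
    exact mul_le_mul_of_nonneg_left (hfac δ) (abs_nonneg _)
  rw [← Finset.sum_mul] at h7
  linarith

/-- K-convexity excludes uniform copies of `ℓ₁` in a fixed dimension. -/
theorem no_ell_one {X : Type*} [NormedAddCommGroup X] [NormedSpace ℂ X] (hX : KConvex X) :
    ∃ m : ℕ, 0 < m ∧ ∀ x : (Fin m → Bool) → X, (∀ δ, ‖x δ‖ ≤ 1) →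
      ∃ a : (Fin m → Bool) → ℝ, ‖∑ δ, a δ • x δ‖ < 1 / 2 * ∑ δ, |a δ| := by
  obtain ⟨q, hq, M, hM⟩ := hX
  obtain ⟨m, hmM⟩ := exists_nat_gt (max 1 ((4 * |M|) ^ 2))
  have hm1 : (1 : ℝ) < m := (le_max_left _ _).trans_lt hmM
  have hm2 : (4 * |M|) ^ 2 < m := (le_max_right _ _).trans_lt hmM
  have hm0 : 0 < m := by
    have : (0 : ℝ) < m := by linarith
    exact_mod_cast this
  have hsq : |M| < Real.sqrt m / 4 := by
    have : 4 * |M| < Real.sqrt m := Real.lt_sqrt_of_sq_lt hm2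
    linarith
  refine ⟨m, hm0, fun x hx => ?_⟩
  by_contra! hcon
  have hpt : ∀ ε : Fin m → Bool, Real.sqrt m / 4 ≤ ‖Rad x ε‖ := by
    intro ε
    have e1 : Rad x ε = ∑ δ : Fin m → Bool, ((2 ^ m : ℝ)⁻¹ * ∑ j, sgn (ε j) * sgn (δ j)) • x δ := by
      simp only [Rad, coeff, walsh, Finset.prod_singleton, Finset.smul_sum, smul_smul]
      rw [Finset.sum_comm]
      refine Finset.sum_congr rfl fun δ _ => ?_
      rw [← Finset.sum_smul, Finset.mul_sum]
      congr 1
      exact Finset.sum_congr rfl fun j _ => by ring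
    rw [e1]
    refine le_trans ?_ (hcon _)
    have h2 := khinchine_one m hm0 (fun j => sgn (ε j)) (fun j => sgn_sq _)
    have h3 : ∀ δ : Fin m → Bool, |(2 ^ m : ℝ)⁻¹ * ∑ j, sgn (ε j) * sgn (δ j)|
        = (2 ^ m : ℝ)⁻¹ * |∑ j, sgn (ε j) * sgn (δ j)| := by
      intro δ
      rw [abs_mul, abs_of_pos (by positivity : (0 : ℝ) < (2 ^ m)⁻¹)]
    simp_rw [h3]
    rw [← Finset.mul_sum]
    calc Real.sqrt m / 4 = 1 / 2 * ((2 ^ m : ℝ)⁻¹ * (2 ^ m * (Real.sqrt m / 2))) := by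
          field_simp; norm_num
      _ ≤ _ := by gcongr
  have hcard : ∑ _ε : Fin m → Bool, (1 : ℝ) = 2 ^ m := by simp
  have hl : Real.sqrt m / 4 ≤ lpNorm q (Rad x) := by
    unfold lpNorm
    have : (Real.sqrt m / 4) = ((Real.sqrt m / 4) ^ q) ^ (1 / q) := by
      rw [← Real.rpow_mul (by positivity), mul_one_div_cancel (by linarith), Real.rpow_one]
    rw [this]
    apply Real.rpow_le_rpow (by positivity) _ (by positivity)
    calc (Real.sqrt m / 4) ^ q = (2 ^ m : ℝ)⁻¹ * ∑ _ε : Fin m → Bool, (Real.sqrt m / 4) ^ q := by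
          simp
      _ ≤ _ := by
          gcongr with ε
          exact hpt ε
  have hu : lpNorm q x ≤ 1 := by
    unfold lpNorm
    apply Real.rpow_le_one (by positivity) _ (by positivity)
    calc _ ≤ (2 ^ m : ℝ)⁻¹ * ∑ _ε : Fin m → Bool, (1 : ℝ) := by
          gcongr with ε
          exact Real.rpow_le_one (norm_nonneg _) (hx ε) (by linarith)
      _ = 1 := by simp
  have hu0 : 0 ≤ lpNorm q x := by unfold lpNorm; positivity
  have := hM m x
  have : M * lpNorm q x ≤ |M| * 1 :=
    mul_le_mul (le_abs_self _) hu hu0 (abs_nonneg _)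
  linarith

theorem tangent_ge (p β r : ℝ) (hp : 1 < p) (hβ : 0 < β) (hr : 1 + β ≤ r) :
    (1 + β) ^ p - 1 - p * β ≤ r ^ p - 1 - p * (r - 1) := by
  have h1 : 0 < 1 + β := by linarith
  have h2 : 1 + p * (r / (1 + β) - 1) ≤ (1 + (r / (1 + β) - 1)) ^ p := by
    apply one_add_mul_self_le_rpow_one_add _ hp.le
    have : 0 ≤ r / (1 + β) := div_nonneg (by linarith) h1.le
    linarith
  rw [add_sub_cancel, Real.div_rpow (by linarith) h1.le, le_div_iff₀ (by positivity)] at h2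
  have h3 : 1 + β ≤ (1 + β) ^ p := by
    calc 1 + β = (1 + β) ^ (1 : ℝ) := (Real.rpow_one _).symm
      _ ≤ _ := Real.rpow_le_rpow_of_exponent_le (by linarith) hp.le
  have h4 : 0 ≤ r / (1 + β) - 1 := by
    rw [sub_nonneg, le_div_iff₀ h1]; linarith
  have h5 : p * (r / (1 + β) - 1) * (1 + β) = p * (r - 1 - β) := by
    field_simp; ring
  have h6 : p * (r / (1 + β) - 1) * (1 + β) ≤ p * (r / (1 + β) - 1) * (1 + β) ^ p := by
    gcongr
  linarith

/-- Normalised version of quantitative Beck convexity. -/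
theorem beck_normalised {J X : Type*} [Fintype J] [DecidableEq J] [Nonempty J] [NormedAddCommGroup X] [NormedSpace ℝ X]
    (h : ∀ x : J → X, (∀ j, ‖x j‖ ≤ 1) → ∃ a : J → ℝ, ‖∑ j, a j • x j‖ < 1 / 2 * ∑ j, |a j|)
    (p : ℝ) (hp : 1 < p) : ∃ κ : ℝ, 0 < κ ∧ κ < 1 ∧ ∀ x : J → X,
      ∑ j, ‖x j‖ ^ p = Fintype.card J →
      ∑ ε : J → Bool, ‖∑ j, sgn (ε j) • x j‖ ^ p ≤
        2 ^ Fintype.card J * (1 - κ) * (Fintype.card J : ℝ) ^ p := by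
  have hn1 : 1 ≤ (Fintype.card J : ℝ) := by exact_mod_cast Fintype.card_pos
  set n : ℝ := (Fintype.card J : ℝ) with hn
  set N : ℝ := 2 ^ Fintype.card J with hN
  have hN1 : 1 ≤ N := one_le_pow₀ (by norm_num)
  set β : ℝ := 1 / (8 * n) with hβ
  have hβ0 : 0 < β := by positivity
  have hβn : n * β = 1 / 8 := by rw [hβ]; field_simp
  have hβ1 : β ≤ 1 / 8 := by nlinarith
  set g : ℝ := (1 + β) ^ p - 1 - p * β with hg
  have hg0 : 0 < g := by
    have := one_add_mul_self_lt_rpow_one_add (by linarith : -1 ≤ β) hβ0.ne' hp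
    rw [hg]; linarith
  set κ : ℝ := min (1 / (8 * n * N)) (g / (2 * p * n * N)) with hκ
  have hκ0 : 0 < κ := by
    apply lt_min <;> positivity
  have hκa : n * (N * κ) ≤ 1 / 8 := by
    calc n * (N * κ) ≤ n * (N * (1 / (8 * n * N))) := by gcongr; exact min_le_left _ _
      _ = 1 / 8 := by field_simp
  have hκb : p * (n * (N * κ)) < g := by
    calc p * (n * (N * κ)) ≤ p * (n * (N * (g / (2 * p * n * N)))) := by gcongr; exact min_le_right _ _
      _ = g / 2 := by field_simp
      _ < g := by linarith
  refine ⟨κ, hκ0, ?_, fun x hx => ?_⟩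
  · have : κ ≤ n * (N * κ) := by
      rw [← mul_assoc]
      exact le_mul_of_one_le_left hκ0.le (one_le_mul_of_one_le_of_one_le hn1 hN1)
    linarith
  by_contra! hcon
  have hp0 : 0 < p := by linarith
  -- sum of norms
  have htan : ∀ j, 0 ≤ ‖x j‖ ^ p - 1 - p * (‖x j‖ - 1) := by
    intro j
    have := one_add_mul_self_le_rpow_one_add (s := ‖x j‖ - 1) (by linarith [norm_nonneg (x j)]) hp.le
    rw [add_sub_cancel] at this
    linarith
  have hsumtan : ∑ j, (‖x j‖ ^ p - 1 - p * (‖x j‖ - 1)) = p * (n - ∑ j, ‖x j‖) := by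
    rw [Finset.sum_sub_distrib, Finset.sum_sub_distrib, hx, ← Finset.mul_sum, Finset.sum_sub_distrib]
    simp only [Finset.sum_const, Finset.card_univ, nsmul_eq_mul, mul_one]
    rw [← hn]; ring
  have hsum : ∑ j, ‖x j‖ ≤ n := by
    have h0 : 0 ≤ p * (n - ∑ j, ‖x j‖) := by
      rw [← hsumtan]; exact Finset.sum_nonneg fun j _ => htan j
    have := nonneg_of_mul_nonneg_right h0 hp0
    linarith
  have hSle : ∀ ε : J → Bool, ‖∑ j, sgn (ε j) • x j‖ ≤ ∑ j, ‖x j‖ := by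
    intro ε
    refine (norm_sum_le _ _).trans_eq (Finset.sum_congr rfl fun j _ => ?_)
    rw [norm_smul, Real.norm_eq_abs, abs_sgn, one_mul]
  have hSge : ∀ ε : J → Bool, n - n * (N * κ) ≤ ‖∑ j, sgn (ε j) • x j‖ := by
    intro ε₀
    have hle : ∀ ε : J → Bool, ‖∑ j, sgn (ε j) • x j‖ ^ p ≤ n ^ p := fun ε =>
      Real.rpow_le_rpow (norm_nonneg _) ((hSle ε).trans hsum) hp0.le
    have h1 : ∑ ε : J → Bool, ‖∑ j, sgn (ε j) • x j‖ ^ p ≤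
        ‖∑ j, sgn (ε₀ j) • x j‖ ^ p + (N - 1) * n ^ p := by
      rw [← Finset.add_sum_erase _ _ (Finset.mem_univ ε₀)]
      gcongr
      refine (Finset.sum_le_card_nsmul _ _ _ (fun ε _ => hle ε)).trans_eq ?_
      rw [nsmul_eq_mul, Finset.card_erase_of_mem (Finset.mem_univ _), Finset.card_univ,
        Fintype.card_fun, Fintype.card_bool, Nat.cast_sub Nat.one_le_two_pow, hN]
      simp
    have h2 : (1 - N * κ) * n ^ p ≤ ‖∑ j, sgn (ε₀ j) • x j‖ ^ p := by nlinarith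
    have h3 : ‖∑ j, sgn (ε₀ j) • x j‖ / n ≤ 1 := by
      rw [div_le_one (by linarith)]; exact (hSle ε₀).trans hsum
    have h4 : (‖∑ j, sgn (ε₀ j) • x j‖ / n) ^ p ≤ ‖∑ j, sgn (ε₀ j) • x j‖ / n :=
      Real.rpow_le_self_of_le_one (by positivity) h3 hp.le
    rw [Real.div_rpow (norm_nonneg _) (by linarith)] at h4
    have h5 : 1 - N * κ ≤ ‖∑ j, sgn (ε₀ j) • x j‖ / n :=
      le_trans (by rw [le_div_iff₀ (by positivity)]; exact h2) h4
    rw [le_div_iff₀ (by linarith)] at h5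
    linarith
  have hr : ∀ j, ‖x j‖ ≤ 1 + β := by
    intro j
    by_contra! hj
    have h1 := tangent_ge p β ‖x j‖ hp hβ0 hj.le
    have h2 : ‖x j‖ ^ p - 1 - p * (‖x j‖ - 1) ≤ p * (n - ∑ j, ‖x j‖) := by
      rw [← hsumtan]
      exact Finset.single_le_sum (f := fun j => ‖x j‖ ^ p - 1 - p * (‖x j‖ - 1))
        (fun j _ => htan j) (Finset.mem_univ j)
    have h3 : p * (n - ∑ j, ‖x j‖) ≤ p * (n * (N * κ)) := by
      gcongr
      linarith [hSge (fun _ => true), hSle (fun _ => true)]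
    linarith
  have h1β : 0 < 1 + β := by linarith
  obtain ⟨a, ha⟩ := h (fun j => (1 + β)⁻¹ • x j) (fun j => by
    rw [norm_smul, Real.norm_eq_abs, abs_of_pos (by positivity), inv_mul_le_iff₀ h1β]
    linarith [hr j])
  set ε : J → Bool := fun j => decide (0 ≤ a j) with hε
  have hεa : ∀ j, |a j| * sgn (ε j) = a j := by
    intro j
    by_cases hj : 0 ≤ a j
    · simp [hε, sgn, hj, abs_of_nonneg hj]
    · simp [hε, sgn, hj, abs_of_neg (not_le.1 hj)]
  obtain ⟨φ, hφ1, hφ⟩ := exists_dual_vector'' ℝ (∑ j, sgn (ε j) • x j)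
  have hφle : ∀ v, φ v ≤ ‖v‖ := by
    intro v
    calc φ v ≤ ‖φ v‖ := Real.le_norm_self _
      _ ≤ ‖φ‖ * ‖v‖ := φ.le_opNorm v
      _ ≤ 1 * ‖v‖ := by gcongr
      _ = ‖v‖ := one_mul _
  have hφj : ∀ j, 3 / 4 ≤ φ (sgn (ε j) • x j) := by
    intro j
    have h1 : ∑ i, φ (sgn (ε i) • x i) = ‖∑ j, sgn (ε j) • x j‖ := by
      rw [← map_sum]; simpa using hφ
    have h2 : ∑ i ∈ Finset.univ.erase j, φ (sgn (ε i) • x i) ≤ (n - 1) * (1 + β) := by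
      refine (Finset.sum_le_card_nsmul _ _ (1 + β) (fun i _ => ?_)).trans_eq ?_
      · refine (hφle _).trans ?_
        rw [norm_smul, Real.norm_eq_abs, abs_sgn, one_mul]; exact hr i
      · rw [nsmul_eq_mul, Finset.card_erase_of_mem (Finset.mem_univ _), Finset.card_univ,
          Nat.cast_sub Fintype.card_pos, hn]
        simp
    rw [← Finset.add_sum_erase _ _ (Finset.mem_univ j)] at h1
    have := hSge ε
    nlinarith
  have hfin : 3 / 4 * ∑ j, |a j| ≤ (1 + β) * ‖∑ j, a j • (1 + β)⁻¹ • x j‖ := by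
    have e1 : ∑ j, a j • (1 + β)⁻¹ • x j = (1 + β)⁻¹ • ∑ j, a j • x j := by
      rw [Finset.smul_sum]
      exact Finset.sum_congr rfl fun j _ => smul_comm _ _ _
    rw [e1, norm_smul, Real.norm_eq_abs, abs_of_pos (by positivity : 0 < (1 + β)⁻¹),
      mul_inv_cancel_left₀ h1β.ne']
    refine le_trans ?_ (hφle _)
    rw [map_sum, Finset.mul_sum]
    refine Finset.sum_le_sum fun j _ => ?_
    have : φ (a j • x j) = |a j| * φ (sgn (ε j) • x j) := by
      conv_lhs => rw [← hεa j, mul_smul, map_smul]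
      rfl
    rw [this, mul_comm]
    exact mul_le_mul_of_nonneg_left (hφj j) (abs_nonneg _)
  have h0 : 0 ≤ ∑ j, |a j| := Finset.sum_nonneg fun j _ => abs_nonneg _
  have h9 : (1 + β) * ‖∑ j, a j • (1 + β)⁻¹ • x j‖ < (1 + β) * (1 / 2 * ∑ j, |a j|) := by
    gcongr
  nlinarith

theorem beck_p {J X : Type*} [Fintype J] [DecidableEq J] [Nonempty J] [NormedAddCommGroup X] [NormedSpace ℝ X]
    (h : ∀ x : J → X, (∀ j, ‖x j‖ ≤ 1) → ∃ a : J → ℝ, ‖∑ j, a j • x j‖ < 1 / 2 * ∑ j, |a j|)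
    (p : ℝ) (hp : 1 < p) : ∃ κ : ℝ, 0 < κ ∧ κ < 1 ∧ ∀ x : J → X,
      ∑ ε : J → Bool, ‖∑ j, sgn (ε j) • x j‖ ^ p ≤
        2 ^ Fintype.card J * (1 - κ) * (Fintype.card J : ℝ) ^ p *
          ((Fintype.card J : ℝ)⁻¹ * ∑ j, ‖x j‖ ^ p) := by
  obtain ⟨κ, hκ0, hκ1, hκ⟩ := beck_normalised h p hp
  refine ⟨κ, hκ0, hκ1, fun x => ?_⟩
  have hn0 : 0 < (Fintype.card J : ℝ) := by exact_mod_cast Fintype.card_pos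
  have hp0 : 0 < p := by linarith
  have hL : 0 ≤ ∑ j, ‖x j‖ ^ p := by positivity
  rcases hL.eq_or_lt with h0 | hpos
  · have hx : ∀ j, x j = 0 := by
      intro j
      have := (Finset.sum_eq_zero_iff_of_nonneg (fun j _ => by positivity)).1 h0.symm j (Finset.mem_univ j)
      rwa [Real.rpow_eq_zero (norm_nonneg _) hp0.ne', norm_eq_zero] at this
    simp [hx, Real.zero_rpow hp0.ne']
  · set L := ∑ j, ‖x j‖ ^ p with hLdef
    set s : ℝ := ((Fintype.card J : ℝ) / L) ^ (1 / p) with hs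
    have hs0 : 0 < s := by positivity
    have hsp : s ^ p = (Fintype.card J : ℝ) / L := by
      rw [hs, ← Real.rpow_mul (by positivity), one_div_mul_cancel hp0.ne', Real.rpow_one]
    have h1 := hκ (fun j => s • x j) (by
      simp_rw [norm_smul, Real.norm_eq_abs, abs_of_pos hs0, Real.mul_rpow hs0.le (norm_nonneg _)]
      rw [← Finset.mul_sum, hsp, ← hLdef]
      field_simp)
    have e1 : ∀ ε : J → Bool, ‖∑ j, sgn (ε j) • s • x j‖ ^ p = s ^ p * ‖∑ j, sgn (ε j) • x j‖ ^ p := by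
      intro ε
      have : ∑ j, sgn (ε j) • s • x j = s • ∑ j, sgn (ε j) • x j := by
        rw [Finset.smul_sum]
        exact Finset.sum_congr rfl fun j _ => smul_comm _ _ _
      rw [this, norm_smul, Real.norm_eq_abs, abs_of_pos hs0, Real.mul_rpow hs0.le (norm_nonneg _)]
    simp_rw [e1] at h1
    rw [← Finset.mul_sum, hsp] at h1
    have h2 := mul_le_mul_of_nonneg_left h1 (by positivity : 0 ≤ (Fintype.card J : ℝ)⁻¹ * L)
    calc _ = (Fintype.card J : ℝ)⁻¹ * L * ((Fintype.card J : ℝ) / L * ∑ ε : J → Bool, ‖∑ j, sgn (ε j) • x j‖ ^ p) := by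
          field_simp
      _ ≤ _ := h2
      _ = _ := by ring

theorem piLp_norm_rpow {Ω X : Type*} [Fintype Ω] [NormedAddCommGroup X] (p : ℝ) (hp : 1 < p)
    [Fact (1 ≤ ENNReal.ofReal p)] (f : PiLp (ENNReal.ofReal p) (fun _ : Ω => X)) :
    ‖f‖ ^ p = ∑ ω, ‖f ω‖ ^ p := by
  have hp0 : 0 < p := by linarith
  have e : (ENNReal.ofReal p).toReal = p := ENNReal.toReal_ofReal hp0.le
  rw [PiLp.norm_eq_sum (by rw [e]; exact hp0), e, ← Real.rpow_mul (by positivity),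
    one_div_mul_cancel hp0.ne', Real.rpow_one]

/-- Uniform Beck convexity of the spaces `L_p(Ω; X)`. -/
theorem beck_Lp {J X : Type*} [Fintype J] [DecidableEq J] [Nonempty J] [NormedAddCommGroup X] [NormedSpace ℂ X]
    (h : ∀ x : J → X, (∀ j, ‖x j‖ ≤ 1) → ∃ a : J → ℝ, ‖∑ j, a j • x j‖ < 1 / 2 * ∑ j, |a j|)
    (p : ℝ) (hp : 1 < p) [Fact (1 ≤ ENNReal.ofReal p)] : ∃ κ : ℝ, 0 < κ ∧
      ∀ N : ℕ, ∀ (x : J → PiLp (ENNReal.ofReal p) (fun _ : Fin N → Bool => X)) (R : ℝ), 0 ≤ R →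
        (∀ j, ‖x j‖ ≤ R) →
        ∃ ε : J → Bool, ‖∑ j, (sgn (ε j) : ℂ) • x j‖ ≤ Fintype.card J * (1 - κ) * R := by
  obtain ⟨κ, hκ0, hκ1, hκ⟩ := beck_p h p hp
  have hp0 : 0 < p := by linarith
  refine ⟨1 - (1 - κ) ^ (1 / p), ?_, fun N x R hR hx => ?_⟩
  · have : (1 - κ) ^ (1 / p) < 1 := Real.rpow_lt_one (by linarith) (by linarith) (by positivity)
    linarith
  have hn0 : 0 < (Fintype.card J : ℝ) := by exact_mod_cast Fintype.card_pos
  set n : ℝ := (Fintype.card J : ℝ) with hn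
  have h1κ : 0 < 1 - κ := by linarith
  have hsum : ∑ ε : J → Bool, ‖∑ j, (sgn (ε j) : ℂ) • x j‖ ^ p ≤
      ∑ _ε : J → Bool, (1 - κ) * n ^ p * R ^ p := by
    simp_rw [piLp_norm_rpow p hp]
    rw [Finset.sum_comm]
    calc ∑ ω, ∑ ε : J → Bool, ‖(∑ j, (sgn (ε j) : ℂ) • x j) ω‖ ^ p
        = ∑ ω, ∑ ε : J → Bool, ‖∑ j, sgn (ε j) • x j ω‖ ^ p := by
          refine Finset.sum_congr rfl fun ω _ => Finset.sum_congr rfl fun ε _ => ?_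
          simp
      _ ≤ ∑ ω, 2 ^ Fintype.card J * (1 - κ) * n ^ p * (n⁻¹ * ∑ j, ‖x j ω‖ ^ p) :=
          Finset.sum_le_sum fun ω _ => hκ (fun j => x j ω)
      _ = 2 ^ Fintype.card J * (1 - κ) * n ^ p * (n⁻¹ * ∑ j, ‖x j‖ ^ p) := by
          simp_rw [piLp_norm_rpow p hp]
          rw [← Finset.mul_sum, ← Finset.mul_sum, Finset.sum_comm]
      _ ≤ 2 ^ Fintype.card J * (1 - κ) * n ^ p * (n⁻¹ * ∑ _j : J, R ^ p) := by
          gcongr with j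
          exact hx j
      _ = _ := by
          simp only [Finset.sum_const, Finset.card_univ, nsmul_eq_mul, Fintype.card_fun, Fintype.card_bool]
          rw [← hn]; push_cast
          field_simp
  obtain ⟨ε, -, hε⟩ := Finset.exists_le_of_sum_le Finset.univ_nonempty hsum
  refine ⟨ε, ?_⟩
  have e : (1 - κ) * n ^ p * R ^ p = (n * (1 - (1 - (1 - κ) ^ (1 / p))) * R) ^ p := by
    rw [sub_sub_cancel, Real.mul_rpow (by positivity) hR, Real.mul_rpow hn0.le (by positivity),
      ← Real.rpow_mul h1κ.le, one_div_mul_cancel hp0.ne', Real.rpow_one]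
    ring
  rw [e] at hε
  refine (Real.rpow_le_rpow_iff (norm_nonneg _) ?_ hp0).1 hε
  rw [sub_sub_cancel]; positivity

theorem walsh_eq {n : ℕ} (A : Finset (Fin n)) (ε : Fin n → Bool) :
    walsh A ε = ∏ i, if i ∈ A then sgn (ε i) else 1 := by
  unfold walsh
  rw [Finset.prod_ite_mem, Finset.univ_inter]

theorem walsh_orth {n : ℕ} (A B : Finset (Fin n)) :
    ∑ δ : Fin n → Bool, walsh A δ * walsh B δ = if A = B then 2 ^ n else 0 := by
  simp_rw [walsh_eq, ← Finset.prod_mul_distrib]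
  rw [← Fintype.prod_sum (fun i (x : Bool) => (if i ∈ A then sgn x else 1) * (if i ∈ B then sgn x else 1))]
  split_ifs with h
  · subst h
    have : ∀ i, ∑ x : Bool, (if i ∈ A then sgn x else 1) * (if i ∈ A then sgn x else 1) = (2 : ℝ) := by
      intro i
      by_cases hi : i ∈ A <;> simp [hi, sgn] <;> norm_num
    simp_rw [this]
    simp
  · obtain ⟨i, hi⟩ : ∃ i, ¬ (i ∈ A ↔ i ∈ B) := by
      by_contra! hc
      exact h (Finset.ext hc)
    apply Finset.prod_eq_zero (Finset.mem_univ i)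
    by_cases hA : i ∈ A <;> by_cases hB : i ∈ B <;> simp [hA, hB, sgn] at hi ⊢

theorem walsh_compl {n : ℕ} (ε δ : Fin n → Bool) :
    ∑ A : Finset (Fin n), walsh A ε * walsh A δ = if ε = δ then 2 ^ n else 0 := by
  simp_rw [walsh, ← Finset.prod_mul_distrib]
  have h1 := Finset.prod_one_add (f := fun i => sgn (ε i) * sgn (δ i)) (Finset.univ : Finset (Fin n))
  rw [Finset.powerset_univ] at h1
  rw [← h1]
  split_ifs with h
  · subst h
    simp_rw [sgn_sq]
    norm_num
  · obtain ⟨i, hi⟩ : ∃ i, ε i ≠ δ i := Function.ne_iff.1 h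
    apply Finset.prod_eq_zero (Finset.mem_univ i)
    cases h1 : ε i <;> cases h2 : δ i <;> simp [h1, h2, sgn] at hi ⊢

theorem coeff_walsh {n : ℕ} (A B : Finset (Fin n)) (v : X) :
    coeff (fun ε => walsh B ε • v) A = if A = B then v else 0 := by
  unfold coeff
  simp_rw [smul_smul]
  rw [← Finset.sum_smul, walsh_orth]
  split_ifs
  · rw [smul_smul, inv_mul_cancel₀ (by positivity), one_smul]
  · simp

theorem walsh_inversion {n : ℕ} (f : (Fin n → Bool) → X) (ε : Fin n → Bool) :
    ∑ A : Finset (Fin n), walsh A ε • coeff f A = f ε := by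
  unfold coeff
  simp_rw [Finset.smul_sum, smul_smul]
  rw [Finset.sum_comm]
  have : ∀ δ : Fin n → Bool, ∑ A : Finset (Fin n), (walsh A ε * ((2 ^ n : ℝ)⁻¹ * walsh A δ)) • f δ
      = if ε = δ then f δ else 0 := by
    intro δ
    rw [← Finset.sum_smul]
    have e : ∑ A : Finset (Fin n), (walsh A ε * ((2 ^ n : ℝ)⁻¹ * walsh A δ))
        = (2 ^ n : ℝ)⁻¹ * ∑ A : Finset (Fin n), walsh A ε * walsh A δ := by
      rw [Finset.mul_sum]
      exact Finset.sum_congr rfl fun A _ => by ring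
    rw [e, walsh_compl]
    split_ifs
    · rw [inv_mul_cancel₀ (by positivity), one_smul]
    · simp
  simp_rw [this]
  simp

/-- The Walsh resolution of the identity. -/
def cubeResol (X : Type*) [NormedAddCommGroup X] [NormedSpace ℂ X] (P : ℝ≥0∞) [Fact (1 ≤ P)] (n : ℕ) :
    Resol (Finset (Fin n)) (PiLp P (fun _ : Fin n → Bool => X)) where
  pr A :=
    { toFun := fun f => WithLp.toLp P (fun ε => walsh A ε • coeff (WithLp.ofLp f) A)
      map_add' := by
        intro f g
        ext ε
        simp [coeff, smul_add, Finset.sum_add_distrib]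
      map_smul' := by
        intro c f
        ext ε
        simp only [coeff, WithLp.ofLp_smul, Pi.smul_apply, RingHom.id_apply, PiLp.smul_apply]
        simp only [Finset.smul_sum]
        refine Finset.sum_congr rfl fun δ _ => ?_
        rw [smul_comm c, smul_comm c, smul_comm c] }
  orth A B f h := by
    ext ε
    simp [coeff_walsh, h]
  idem A f := by
    ext ε
    simp [coeff_walsh]
  tot f := by
    ext ε
    simp [walsh_inversion]

theorem cubeResol_pr {n : ℕ} (P : ℝ≥0∞) [Fact (1 ≤ P)] (A : Finset (Fin n))
    (f : PiLp P (fun _ : Fin n → Bool => X)) (ε : Fin n → Bool) :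
    (cubeResol X P n).pr A f ε = walsh A ε • coeff (WithLp.ofLp f) A := rfl

theorem cubeResol_mul {n : ℕ} (P : ℝ≥0∞) [Fact (1 ≤ P)] (m : Finset (Fin n) → ℂ)
    (f : PiLp P (fun _ : Fin n → Bool => X)) (ε : Fin n → Bool) :
    (cubeResol X P n).mul m f ε = ∑ A, m A • walsh A ε • coeff (WithLp.ofLp f) A := by
  simp [Resol.mul, cubeResol_pr]

theorem walsh_mul {n : ℕ} (A : Finset (Fin n)) (ε η : Fin n → Bool) :
    walsh A (fun i => ε i == η i) = walsh A η * walsh A ε := by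
  simp only [walsh, ← Finset.prod_mul_distrib]
  refine Finset.prod_congr rfl fun i _ => ?_
  cases ε i <;> cases η i <;> simp [sgn]

theorem flip_isometry {n : ℕ} (p : ℝ) (hp : 1 < p) [Fact (1 ≤ ENNReal.ofReal p)] (η : Fin n → Bool)
    (f : PiLp (ENNReal.ofReal p) (fun _ : Fin n → Bool => X)) :
    ‖(cubeResol X (ENNReal.ofReal p) n).mul (fun A => (walsh A η : ℂ)) f‖ = ‖f‖ := by
  have hp0 : 0 < p := by linarith
  have h1 : ∀ ε, (cubeResol X (ENNReal.ofReal p) n).mul (fun A => (walsh A η : ℂ)) f ε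
      = f (fun i => ε i == η i) := by
    intro ε
    rw [cubeResol_mul]
    conv_rhs => rw [← walsh_inversion (WithLp.ofLp f) (fun i => ε i == η i)]
    refine Finset.sum_congr rfl fun A _ => ?_
    rw [walsh_mul, Complex.coe_smul, smul_smul]
  have h2 : Function.Involutive (fun (ε : Fin n → Bool) i => ε i == η i) := by
    intro ε
    funext i
    show ((ε i == η i) == η i) = ε i
    cases ε i <;> cases η i <;> rfl
  have h3 : ‖(cubeResol X (ENNReal.ofReal p) n).mul (fun A => (walsh A η : ℂ)) f‖ ^ p = ‖f‖ ^ p := by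
    rw [piLp_norm_rpow p hp, piLp_norm_rpow p hp]
    simp_rw [h1]
    exact Equiv.sum_comp (h2.toPerm _) (fun ε => ‖f ε‖ ^ p)
  exact (Real.rpow_left_inj (norm_nonneg _) (norm_nonneg _) hp0.ne').1 h3

/-- The symbol of the conditional expectation that averages out the coordinates in `S`. -/
def qsym {n : ℕ} (S A : Finset (Fin n)) : ℂ := if Disjoint A S then 1 else 0

theorem qsym_eq {n : ℕ} (S : Finset (Fin n)) :
    qsym S = ∑ η : Fin n → Bool, ((2 ^ n : ℂ)⁻¹) •
      (fun A => (walsh A (fun i => if i ∈ S then η i else true) : ℂ)) := by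
  funext A
  rw [← Finset.smul_sum]
  simp only [Pi.smul_apply, Finset.sum_apply, smul_eq_mul]
  have h1 : ∑ η : Fin n → Bool, walsh A (fun i => if i ∈ S then η i else true)
      = if Disjoint A S then 2 ^ n else 0 := by
    simp_rw [walsh_eq]
    rw [← Fintype.prod_sum (fun i (x : Bool) => (if i ∈ A then sgn (if i ∈ S then x else true) else 1))]
    split_ifs with h
    · have : ∀ i, ∑ x : Bool, (if i ∈ A then sgn (if i ∈ S then x else true) else 1) = 2 := by
        intro i
        by_cases hi : i ∈ A
        · have : i ∉ S := Finset.disjoint_left.1 h hi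
          simp [this, sgn]
        · simp [hi]
      simp_rw [this]
      simp
    · obtain ⟨i, hA, hS⟩ := Finset.not_disjoint_iff.1 h
      apply Finset.prod_eq_zero (Finset.mem_univ i)
      simp [hA, hS, sgn]
  rw [← Complex.ofReal_sum, h1, qsym]
  split_ifs
  · push_cast
    rw [inv_mul_cancel₀ (pow_ne_zero _ two_ne_zero)]
  · simp

theorem qsym_bound {n : ℕ} (p : ℝ) (hp : 1 < p) [Fact (1 ≤ ENNReal.ofReal p)] (S : Finset (Fin n))
    (f : PiLp (ENNReal.ofReal p) (fun _ : Fin n → Bool => X)) :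
    ‖(cubeResol X (ENNReal.ofReal p) n).mul (qsym S) f‖ ≤ ‖f‖ := by
  rw [qsym_eq, Resol.mul_sum]
  refine (norm_sum_le _ _).trans_eq ?_
  simp_rw [Resol.mul_smul, norm_smul, flip_isometry p hp]
  simp

theorem qsym_idem {n : ℕ} (S : Finset (Fin n)) : qsym S * qsym S = qsym S := by
  funext A
  simp [qsym]

theorem heat_sym {n : ℕ} (r : ℂ) (A : Finset (Fin n)) :
    ∑ S : Finset (Fin n), ((∏ _i ∈ S, (1 - r)) * ∏ _i ∈ Finset.univ \ S, r) * qsym S A = r ^ A.card := by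
  have h1 := Finset.prod_add (fun i => if i ∈ A then 0 else 1 - r) (fun _ => r) (Finset.univ : Finset (Fin n))
  rw [Finset.powerset_univ] at h1
  have h2 : ∏ i : Fin n, ((if i ∈ A then 0 else 1 - r) + r) = r ^ A.card := by
    have : ∀ i, ((if i ∈ A then 0 else 1 - r) + r) = if i ∈ A then r else 1 := by
      intro i; split_ifs <;> ring
    simp_rw [this]
    rw [Finset.prod_ite_mem, Finset.univ_inter, Finset.prod_const]
  rw [← h2, h1]
  refine Finset.sum_congr rfl fun S _ => ?_
  unfold qsym
  split_ifs with h
  · rw [mul_one]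
    congr 1
    refine Finset.prod_congr rfl fun i hi => ?_
    rw [if_neg (fun hA => Finset.disjoint_left.1 h hA hi)]
  · obtain ⟨i, hA, hS⟩ := Finset.not_disjoint_iff.1 h
    have h0 : (∏ i ∈ S, if i ∈ A then 0 else 1 - r) = 0 :=
      Finset.prod_eq_zero hS (if_pos hA)
    rw [h0]
    simp

theorem lpNorm_eq {n : ℕ} (p : ℝ) (hp : 1 < p) [Fact (1 ≤ ENNReal.ofReal p)] (f : (Fin n → Bool) → X) :
    lpNorm p f = ((2 ^ n : ℝ)⁻¹) ^ (1 / p) *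
      ‖(WithLp.toLp (ENNReal.ofReal p) f : PiLp (ENNReal.ofReal p) (fun _ : Fin n → Bool => X))‖ := by
  have hp0 : 0 < p := by linarith
  have h := piLp_norm_rpow p hp (WithLp.toLp (ENNReal.ofReal p) f : PiLp (ENNReal.ofReal p) (fun _ : Fin n → Bool => X))
  unfold lpNorm
  have h' : ∑ ω, ‖f ω‖ ^ p = ‖(WithLp.toLp (ENNReal.ofReal p) f : PiLp (ENNReal.ofReal p) (fun _ : Fin n → Bool => X))‖ ^ p := h.symm
  rw [h', Real.mul_rpow (by positivity) (by positivity), ← Real.rpow_mul (norm_nonneg _),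
    mul_one_div_cancel hp0.ne', Real.rpow_one]

theorem exists_tan_le (κ : ℝ) (hκ : 0 < κ) : ∃ A : ℕ, 2 ≤ A ∧ Real.tan (Real.pi / (2 * A)) ≤ κ := by
  have h1 : Filter.Tendsto (fun A : ℕ => Real.pi / (2 * (A : ℝ))) Filter.atTop (nhds 0) := by
    apply Filter.Tendsto.div_atTop tendsto_const_nhds
    exact Filter.Tendsto.const_mul_atTop (by norm_num) tendsto_natCast_atTop_atTop
  have h2 : ContinuousAt Real.tan 0 := Real.continuousAt_tan.2 (by simp)
  have h3 := h2.tendsto.comp h1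
  rw [Real.tan_zero] at h3
  obtain ⟨A, hA, hA2⟩ := ((h3.eventually (gt_mem_nhds hκ)).and (Filter.eventually_ge_atTop 2)).exists
  exact ⟨A, hA2, hA.le⟩

/-- The heat semigroup on `L_p` is a contraction and `1 + e^{-tΔ}` is uniformly bounded below. -/
theorem heat_lower {J : Type*} [Fintype J] [Nonempty J] (p : ℝ) (hp : 1 < p)
    [Fact (1 ≤ ENNReal.ofReal p)] (N : ℕ) (κ : ℝ) (hκ : 0 < κ)
    (beck : ∀ (x : J → PiLp (ENNReal.ofReal p) (fun _ : Fin N → Bool => X)) (R : ℝ), 0 ≤ R →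
        (∀ j, ‖x j‖ ≤ R) →
        ∃ ε : J → Bool, ‖∑ j, (sgn (ε j) : ℂ) • x j‖ ≤ Fintype.card J * (1 - κ) * R)
    (t : ℝ) (ht : 0 ≤ t) :
    (∀ f, ‖(cubeResol X (ENNReal.ofReal p) N).mul (Resol.sg (fun A => (A.card : ℝ)) t) f‖ ≤ ‖f‖) ∧
    ∀ f, (κ / (Fintype.card J * 2 ^ Fintype.card J)) * ‖f‖ ≤
      ‖f + (cubeResol X (ENNReal.ofReal p) N).mul (Resol.sg (fun A => (A.card : ℝ)) t) f‖ := by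
  have hr1 : Real.exp (-t) ≤ 1 := Real.exp_le_one_iff.2 (by linarith)
  refine Resol.lower_bound (cubeResol X (ENNReal.ofReal p) N) (S := Finset (Fin N)) qsym
    (fun S => (∏ _i ∈ S, (1 - Real.exp (-t))) * ∏ _i ∈ Finset.univ \ S, Real.exp (-t))
    ?_ ?_ (fun S f => qsym_bound p hp S f) qsym_idem κ hκ beck _ ?_
  · intro S
    exact mul_nonneg (Finset.prod_nonneg fun _ _ => by linarith) (by positivity)
  · have := Finset.prod_add (fun _ => 1 - Real.exp (-t)) (fun _ => Real.exp (-t)) (Finset.univ : Finset (Fin N))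
    rw [Finset.powerset_univ] at this
    rw [← this]
    simp
  · funext A
    have h := heat_sym ((Real.exp (-t) : ℝ) : ℂ) A
    simp only [Finset.sum_apply, Pi.smul_apply, smul_eq_mul]
    push_cast at h ⊢
    rw [h, Resol.sg, ← Complex.exp_nat_mul]
    congr 1
    push_cast
    ring

theorem heat_eq {n : ℕ} (P : ℝ≥0∞) [Fact (1 ≤ P)] (t : ℝ) (f : (Fin n → Bool) → X) :
    (WithLp.toLp P (heat t f) : PiLp P (fun _ : Fin n → Bool => X)) =
      (cubeResol X P n).mul (Resol.sg (fun A => (A.card : ℝ)) t) (WithLp.toLp P f) := by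
  ext ε
  rw [cubeResol_mul]
  show ∑ A : Finset (Fin n), Real.exp (-t * A.card) • walsh A ε • coeff f A = _
  refine Finset.sum_congr rfl fun A _ => ?_
  rw [← Complex.coe_smul (Real.exp _)]
  congr 1
  rw [Resol.sg]
  push_cast
  rfl

/-- **Mendel–Naor heat smoothing theorem** for `K`-convex targets. -/
theorem stmt5 {X : Type*} [NormedAddCommGroup X] [NormedSpace ℂ X] [CompleteSpace X]
    (hX : KConvex X) (p : ℝ) (hp : 1 < p) :
    ∃ c C : ℝ, 0 < c ∧ 0 < C ∧ ∃ A : ℝ, 1 ≤ A ∧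
      ∀ n d : ℕ, d < n → ∀ f : (Fin n → Bool) → X, tailSpace f d → ∀ t : ℝ, 0 ≤ t →
        lpNorm p (heat t f) ≤
          C * Real.exp (-(c * d * min t (t ^ A))) * lpNorm p f := by
  have hp0 : 0 < p := by linarith
  haveI : Fact (1 ≤ ENNReal.ofReal p) := ⟨by
    rw [← ENNReal.ofReal_one]; exact ENNReal.ofReal_le_ofReal hp.le⟩
  obtain ⟨m, hm, hno⟩ := no_ell_one hX
  obtain ⟨κ₀, hκ₀, hbeck⟩ := beck_Lp hno p hp
  set n₀ : ℕ := Fintype.card (Fin m → Bool) with hn₀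
  have hn₀pos : 0 < (n₀ : ℝ) := by exact_mod_cast (Fintype.card_pos : 0 < Fintype.card (Fin m → Bool))
  set δ : ℝ := κ₀ / (n₀ * 2 ^ n₀) with hδ
  have hδ0 : 0 < δ := by positivity
  have hpi := Real.pi_pos
  set M : ℝ := 2 + 2 * Real.pi / δ with hM
  have hM0 : 0 < M := by positivity
  set C₁ : ℝ := 3 * (1 + M) * M ^ 2 with hC₁
  have hC₁0 : 0 < C₁ := by positivity
  set κ : ℝ := 1 / (6 * C₁) with hκ
  have hκ0 : 0 < κ := by positivity
  obtain ⟨A, hA2, hAκ⟩ := exists_tan_le κ hκ0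
  set a : ℝ := Real.pi / κ with ha
  have ha0 : 0 < a := by positivity
  set c : ℝ := min (1 / 2) (a / (2 * a * (1 + κ)) ^ A) with hc
  have hc0 : 0 < c := lt_min (by norm_num) (by positivity)
  have hcA : c * (2 * a * (1 + κ)) ^ A ≤ a := by
    calc c * (2 * a * (1 + κ)) ^ A ≤ a / (2 * a * (1 + κ)) ^ A * (2 * a * (1 + κ)) ^ A := by
          gcongr; exact min_le_right _ _
      _ = a := by field_simp
  refine ⟨c, 2, hc0, by norm_num, (A : ℝ), by exact_mod_cast (by omega : 1 ≤ A), ?_⟩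
  intro n d hd f hf t ht
  set P := cubeResol X (ENNReal.ofReal p) n with hP
  set k : Finset (Fin n) → ℕ := Finset.card with hk
  have hHL := fun (s : ℝ) (hs : 0 ≤ s) =>
    heat_lower (X := X) p hp n κ₀ hκ₀ (hbeck n) s hs
  have hR : ∀ μ : ℂ, 0 < μ.re → ∀ g, ‖P.mul (fun i => 1 / (μ + ((k i : ℝ) : ℂ))) g‖ ≤ M / ‖μ‖ * ‖g‖ := by
    intro μ hμ g
    exact P.resolvent_bound (fun i => (k i : ℝ)) (fun i => Nat.cast_nonneg _)
      (fun s hs g => (hHL s hs).1 g) δ hδ0 (fun s hs g => (hHL s hs).2 g) μ hμ g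
  have hD : ∀ s : ℝ, 0 < s → ∀ g,
      ‖P.mul (fun i => ((k i : ℝ) : ℂ) * Resol.sg (fun i => (k i : ℝ)) s i) g‖ ≤ C₁ / s * ‖g‖ := by
    intro s hs g
    exact P.deriv_bound (fun i => (k i : ℝ)) (fun i => Nat.cast_nonneg _) M hM0.le hR s hs g
  have hS : ∀ s u : ℝ, 0 < s → |u| ≤ κ * s → ∀ g,
      ‖P.mul (Resol.sg (fun i => (k i : ℝ)) (s + u * Complex.I)) g‖ ≤ 2 * ‖g‖ := by
    intro s u hs hu g
    exact P.sector_bound (fun i => (k i : ℝ)) (fun s hs g => (hHL s hs).1 g) C₁ hC₁0 hD s u hs hu g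
  set F : PiLp (ENNReal.ofReal p) (fun _ : Fin n → Bool => X) := WithLp.toLp (ENNReal.ofReal p) f with hF
  have hFd : ∀ i, k i < d → P.pr i F = 0 := by
    intro i hi
    ext ε
    rw [hP, cubeResol_pr, hF]
    have h0 : coeff f i = 0 := hf i hi
    simp [h0]
  have hd0 : (0 : ℝ) ≤ d := Nat.cast_nonneg d
  have main : ‖P.mul (Resol.sg (fun i => (k i : ℝ)) t) F‖ ≤
      2 * Real.exp (-(c * d * min t (t ^ (A : ℝ)))) * ‖F‖ := by
    rcases ht.eq_or_lt with h0 | hpos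
    · subst h0
      have h1 := (hHL 0 le_rfl).1 F
      have h2 : min (0 : ℝ) (0 ^ (A : ℝ)) = 0 := by
        rw [Real.rpow_natCast, zero_pow (by omega), min_self]
      rw [h2, MulZeroClass.mul_zero, neg_zero, Real.exp_zero]
      refine h1.trans ?_
      linarith [norm_nonneg F]
    · by_cases hta : t < 2 * a
      · have h1 := P.near_bound k κ hκ0 hS A hA2 hAκ c hc0 hcA d F hFd t hpos hta
        refine h1.trans ?_
        gcongr
        rw [Real.rpow_natCast]
        exact min_le_right _ _
      · have hta' : 2 * a ≤ t := not_lt.1 hta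
        have h1 := P.far_bound k κ hκ0 hS d F hFd (t : ℂ) (by
          rw [Complex.ofReal_re]; linarith)
        refine h1.trans ?_
        rw [Complex.ofReal_re]
        refine mul_le_mul_of_nonneg_right (mul_le_mul_of_nonneg_left
          (Real.exp_le_exp.2 (neg_le_neg ?_)) (by norm_num)) (norm_nonneg _)
        have h2 : c * min t (t ^ (A : ℝ)) ≤ t - a := by
          calc c * min t (t ^ (A : ℝ)) ≤ 1 / 2 * t :=
                mul_le_mul (min_le_left _ _) (min_le_left _ _) (by positivity) (by norm_num)
            _ ≤ t - a := by linarith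
        calc c * d * min t (t ^ (A : ℝ)) = d * (c * min t (t ^ (A : ℝ))) := by ring
          _ ≤ d * (t - a) := by gcongr
  rw [lpNorm_eq p hp, lpNorm_eq p hp, heat_eq]
  have hw : 0 ≤ ((2 ^ n : ℝ)⁻¹) ^ (1 / p) := by positivity
  calc _ ≤ ((2 ^ n : ℝ)⁻¹) ^ (1 / p) * (2 * Real.exp (-(c * d * min t (t ^ (A : ℝ)))) * ‖F‖) :=
        mul_le_mul_of_nonneg_left main hw
    _ = _ := by ring

end HammingCube
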